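/- There is C > 0 such that for every even integer n ≥ 2 and all x, y ∈ [−2·n^{2/3}, ∞) with x ≠ y, x ≠ 0, y ≠ 0: (i) |J₁ⁿ(x,y)| ≤ C·(Ĝ_{−1/4,1/4,1}(x,y) + |x|^{−1/4}); (ii) |∂_y J₁ⁿ(x,y)| ≤ C·(Ĝ_{−1/4,1/4,2}(x,y) + Ĝ_{−3/4,1/4,1}(x,y)), where ∂_y J₁ⁿ denotes the derivative in the second variable; (iii) |∫_x^y J₁ⁿ(u,x) du| ≤ C. -/

import Mathlib

open MeasureTheory Filter Set

noncomputable section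

/-- The Airy function `Ai(x) = (1/π)·lim_{b→∞} ∫_0^b cos(t³/3 + x·t) dt`. -/
def Ai (x : ℝ) : ℝ :=
  (1 / Real.pi) *
    limUnder Filter.atTop (fun b : ℝ => ∫ t in (0:ℝ)..b, Real.cos (t ^ 3 / 3 + x * t))

/-- The Airy kernel. -/
def KAi (x y : ℝ) : ℝ :=
  if x = y then (deriv Ai x) ^ 2 - x * (Ai x) ^ 2
  else (Ai x * deriv Ai y - deriv Ai x * Ai y) / (x - y)

/-- One-point correlation function of the Airy₂ random point field. -/
def rho (x : ℝ) : ℝ := (deriv Ai x) ^ 2 - x * (Ai x) ^ 2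

/-- Probabilists' Hermite polynomial `Ĥ_m(x) = (−1)^m e^{x²/2} (d/dx)^m e^{−x²/2}`. -/
def hermiteP (m : ℕ) (x : ℝ) : ℝ :=
  (-1 : ℝ) ^ m * Real.exp (x ^ 2 / 2) * iteratedDeriv m (fun t => Real.exp (-t ^ 2 / 2)) x

/-- Normalized oscillator function `φ_m`. -/
def osc (m : ℕ) (x : ℝ) : ℝ :=
  (2 * Real.pi) ^ (-(1:ℝ)/4) * ((m.factorial : ℝ)) ^ (-(1:ℝ)/2) *
    Real.exp (-x ^ 2 / 4) * hermiteP m x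

/-- `ψ_mⁿ(x) = n^{1/12}·φ_m(2√n + n^{−1/6}·x)`. -/
def psiUp (n m : ℕ) (x : ℝ) : ℝ :=
  (n : ℝ) ^ ((1:ℝ)/12) * osc m (2 * Real.sqrt n + (n : ℝ) ^ (-(1:ℝ)/6) * x)

/-- `ψ_n = ψ_nⁿ`. -/
def psiN (n : ℕ) : ℝ → ℝ := psiUp n n

/-- The finite-`n` Airy kernel. -/
def KAiN (n : ℕ) (x y : ℝ) : ℝ :=
  if x = y then
    (deriv (psiN n) x) ^ 2 - psiN n x * deriv (deriv (psiN n)) x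
      - (1 / (2 * (n : ℝ) ^ ((1:ℝ)/3))) * (psiN n x) ^ 2
  else
    (psiN n x * deriv (psiN n) y - deriv (psiN n) x * psiN n y) / (x - y)
      - (1 / (2 * (n : ℝ) ^ ((1:ℝ)/3))) * (psiN n x * psiN n y)

/-- `(εf)(x) = (1/2)·∫_ℝ sign(x − y)·f(y) dy`. -/
def epsF (f : ℝ → ℝ) (x : ℝ) : ℝ := (1/2) * ∫ y : ℝ, Real.sign (x - y) * f y

/-- `εψ_n`. -/
def epsPsi (n : ℕ) : ℝ → ℝ := epsF (psiN n)

/-- `J₁(x,y) = K_Ai(x,y) + (1/2)·Ai(x)·(1 − ∫_y^∞ Ai(u) du)`. -/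
def J1 (x y : ℝ) : ℝ := KAi x y + (1/2) * Ai x * (1 - ∫ u in Set.Ioi y, Ai u)

/-- Scalar part of the quaternion product of Airy₁ kernels. -/
def L1 (x y : ℝ) : ℝ :=
  J1 x y * J1 y x -
    deriv (fun v => J1 x v) y * ((∫ u in x..y, J1 u x) - (1/2) * Real.sign (y - x))

/-- `J₁ⁿ(x,y) = K_Aiⁿ(x,y) + (1/2)·ψ_{n−1}ⁿ(x)·(εψ_n)(y)`. -/
def J1N (n : ℕ) (x y : ℝ) : ℝ :=
  KAiN n x y + (1/2) * psiUp n (n - 1) x * epsPsi n y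

/-- Scalar part of the quaternion product of finite-`n` Airy₁ kernels. -/
def L1N (n : ℕ) (x y : ℝ) : ℝ :=
  J1N n x y * J1N n y x -
    deriv (fun v => J1N n x v) y * ((∫ u in x..y, J1N n u x) - (1/2) * Real.sign (y - x))

/-- `ρ̂(x) = (1/π)·√(−x)` for `x < 0`, and `0` otherwise. -/
def rhoHat (x : ℝ) : ℝ := if x < 0 then Real.sqrt (-x) / Real.pi else 0

/-- `ρ̂ⁿ(x) = (1/π)·√(−x·(1 + x/(4·n^{2/3})))` on `(−4n^{2/3}, 0)`, and `0` otherwise. -/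
def rhoHatN (n : ℕ) (x : ℝ) : ℝ :=
  if -(4 * (n : ℝ) ^ ((2:ℝ)/3)) < x ∧ x < 0 then
    Real.sqrt (-x * (1 + x / (4 * (n : ℝ) ^ ((2:ℝ)/3)))) / Real.pi
  else 0

/-- `G_{a,b,c}(x,y) = |x|^{−a}·|y|^{−b}·|x−y|^{−c}`. -/
def Gf (a b c : ℝ) (x y : ℝ) : ℝ := |x| ^ (-a) * |y| ^ (-b) * |x - y| ^ (-c)

/-- `Ĝ_{a,b,c}(x,y) = G_{a,b,c}(x,y) + G_{a,b,c}(y,x)`. -/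
def Ghat (a b c : ℝ) (x y : ℝ) : ℝ := Gf a b c x y + Gf a b c y x

/-- Soft-edge one-point correlation function of the `n`-point GUE ensemble. -/
def rhoN (n : ℕ) (x : ℝ) : ℝ :=
  (deriv (psiN n) x) ^ 2 - (x ^ 2 / (4 * (n : ℝ) ^ ((2:ℝ)/3)) + x) * (psiN n x) ^ 2

end

/-!
Put `N = n^{1/3}`. In the edge coordinate `ψ = ψ_n` solves `ψ'' = Vψ` with
`V(x) = x + x²/(4N²) - 1/(2N)`, and the lowered function `ψ_{n-1}ⁿ` is `ψ'/N + (1 + x/(2N²))ψ`, so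
`J₁ⁿ` is an expression in `ψ`, `ψ'` and `Φ = εψ_n`. Since `n` is even, `ψ'` and `Φ` vanish at the
centre `-2N²` of the oscillator, where the size of `ψ` is an explicit Hermite value. From there the
Liouville–Green energy `√(-V) ψ² + (ψ' + V'ψ/(4V))²/√(-V)` propagates the Airy bounds
`|ψ| ≲ (1 + |x|)^{-1/4}` and `|ψ'| ≲ (1 + |x|)^{1/4}` to `x ≤ -1`, uniformly in `n`; a Gronwall
estimate crosses the turning point, beyond which `ψψ' → 0` forces exponential decay. Integrating
`Φ = ∫ ψ''/V` by parts twice from the centre gives `|Φ| ≲ (1 + |x|)^{-3/4}` on the left.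

The pointwise bounds on `J₁ⁿ` and its derivative follow term by term. The integral bound needs
cancellation in `∫ (ψ(u)ψ'(x) - ψ'(u)ψ(x))/(u - x) du`: the mean value theorem is used for
`|u - x| ≤ (1 + |x|)^{-1/2}`, and integration by parts against the primitives `Φ` and `ψ` outside.
-/

/-! ### Differential inequalities -/

section DifferentialInequalities

variable {f f' κ k : ℝ → ℝ} {a b : ℝ}

lemma apply_le_apply_of_hasDerivAt_nonpos (hab : a ≤ b)
    (hf : ∀ x ∈ Icc a b, HasDerivAt f (f' x) x) (hf' : ∀ x ∈ Icc a b, f' x ≤ 0) : f b ≤ f a :=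
  antitoneOn_of_hasDerivWithinAt_nonpos (convex_Icc a b)
    (fun x hx => (hf x hx).continuousAt.continuousWithinAt)
    (fun x hx => (hf x (interior_subset hx)).hasDerivWithinAt)
    (fun x hx => hf' x (interior_subset hx)) (left_mem_Icc.2 hab) (right_mem_Icc.2 hab) hab

lemma norm_sub_le_sub_of_norm_deriv_le {E : Type*} [NormedAddCommGroup E] [NormedSpace ℝ E]
    {f f' : ℝ → E} {g g' : ℝ → ℝ} (hab : a ≤ b)
    (hf : ∀ x ∈ Icc a b, HasDerivAt f (f' x) x) (hg : ∀ x ∈ Icc a b, HasDerivAt g (g' x) x)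
    (hle : ∀ x ∈ Icc a b, ‖f' x‖ ≤ g' x) : ‖f b - f a‖ ≤ g b - g a := by
  have hf₀ : ∀ x ∈ Icc a b, HasDerivAt (fun u => f u - f a) (f' x) x :=
    fun x hx => (hf x hx).sub_const _
  have hg₀ : ∀ x ∈ Icc a b, HasDerivAt (fun u => g u - g a) (g' x) x :=
    fun x hx => (hg x hx).sub_const _
  exact image_norm_le_of_norm_deriv_right_le_deriv_boundary'
    (fun x hx => (hf₀ x hx).continuousAt.continuousWithinAt)
    (fun x hx => (hf₀ x (Ico_subset_Icc_self hx)).hasDerivWithinAt) (by simp)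
    (fun x hx => (hg₀ x hx).continuousAt.continuousWithinAt)
    (fun x hx => (hg₀ x (Ico_subset_Icc_self hx)).hasDerivWithinAt)
    (fun x hx => hle x (Ico_subset_Icc_self hx)) (right_mem_Icc.2 hab)

lemma norm_integral_le_sub_of_norm_le_deriv {E : Type*} [NormedAddCommGroup E] [NormedSpace ℝ E]
    [CompleteSpace E] {f : ℝ → E} {g g' : ℝ → ℝ} (hab : a ≤ b) (hf : Continuous f)
    (hg : ∀ x ∈ Icc a b, HasDerivAt g (g' x) x) (hle : ∀ x ∈ Icc a b, ‖f x‖ ≤ g' x) :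
    ‖∫ x in a..b, f x‖ ≤ g b - g a := by
  simpa using norm_sub_le_sub_of_norm_deriv_le (f := fun u => ∫ x in a..u, f x) hab
    (fun x _ => hf.integral_hasStrictDerivAt a x |>.hasDerivAt) hg hle

lemma le_mul_exp_of_deriv_le_mul (hab : a ≤ b) (hf : ∀ x ∈ Icc a b, HasDerivAt f (f' x) x)
    (hκ : ∀ x ∈ Icc a b, HasDerivAt κ (k x) x) (hle : ∀ x ∈ Icc a b, f' x ≤ k x * f x) :
    f b ≤ f a * Real.exp (κ b - κ a) := by
  have hanti : f b * Real.exp (-κ b) ≤ f a * Real.exp (-κ a) := by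
    refine apply_le_apply_of_hasDerivAt_nonpos (f := fun x => f x * Real.exp (-κ x)) hab
      (fun x hx => (hf x hx).mul (hκ x hx).neg.exp) (fun x hx => ?_)
    have := mul_le_mul_of_nonneg_left (hle x hx) (Real.exp_pos (-κ x)).le
    simp only [Pi.neg_apply]
    linarith
  calc f b = f b * Real.exp (-κ b) * Real.exp (κ b) := by
        rw [mul_assoc, ← Real.exp_add]; simp
    _ ≤ f a * Real.exp (-κ a) * Real.exp (κ b) := by gcongr
    _ = f a * Real.exp (κ b - κ a) := by
        rw [mul_assoc, ← Real.exp_add, neg_add_eq_sub]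

end DifferentialInequalities

/-! ### Solutions of `ψ'' = Vψ` -/

/-- On the set `s`, the function `ψ` has derivative `ψ'` and solves the Schrödinger equation
`ψ'' = V ψ`. -/
structure IsSchrodingerSolutionOn (V ψ ψ' : ℝ → ℝ) (s : Set ℝ) : Prop where
  hasDerivAt : ∀ x ∈ s, HasDerivAt ψ (ψ' x) x
  hasDerivAt_deriv : ∀ x ∈ s, HasDerivAt ψ' (V x * ψ x) x

namespace IsSchrodingerSolutionOn

variable {V ψ ψ' : ℝ → ℝ} {s t : Set ℝ} {a b c x y : ℝ}

lemma mono (h : IsSchrodingerSolutionOn V ψ ψ' s) (hts : t ⊆ s) :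
    IsSchrodingerSolutionOn V ψ ψ' t :=
  ⟨fun x hx => h.hasDerivAt x (hts hx), fun x hx => h.hasDerivAt_deriv x (hts hx)⟩

lemma hasDerivAt_mul_deriv (h : IsSchrodingerSolutionOn V ψ ψ' s) (hx : x ∈ s) :
    HasDerivAt (fun u => ψ u * ψ' u) (ψ' x ^ 2 + V x * ψ x ^ 2) x :=
  ((h.hasDerivAt x hx).mul (h.hasDerivAt_deriv x hx)).congr_deriv (by ring)

lemma hasDerivAt_sq (h : IsSchrodingerSolutionOn V ψ ψ' s) (hx : x ∈ s) :
    HasDerivAt (fun u => ψ u ^ 2) (2 * (ψ x * ψ' x)) x :=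
  ((h.hasDerivAt x hx).pow 2).congr_deriv (by push_cast; ring)

lemma hasDerivAt_deriv_sq (h : IsSchrodingerSolutionOn V ψ ψ' s) (hx : x ∈ s) :
    HasDerivAt (fun u => ψ' u ^ 2) (2 * V x * (ψ x * ψ' x)) x :=
  ((h.hasDerivAt_deriv x hx).pow 2).congr_deriv (by push_cast; ring)

lemma sq_add_deriv_sq_le (h : IsSchrodingerSolutionOn V ψ ψ' (Icc a b)) (hab : a ≤ b)
    (hV : ∀ x ∈ Icc a b, |1 + V x| ≤ c) :
    ψ b ^ 2 + ψ' b ^ 2 ≤ (ψ a ^ 2 + ψ' a ^ 2) * Real.exp (c * b - c * a) := by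
  refine le_mul_exp_of_deriv_le_mul (f := fun x => ψ x ^ 2 + ψ' x ^ 2) (κ := fun x => c * x)
    (k := fun _ => c) hab
    (fun x hx => (h.hasDerivAt_sq hx).add (h.hasDerivAt_deriv_sq hx))
    (fun x _ => by simpa using (hasDerivAt_id x).const_mul c) (fun x hx => ?_)
  have hcross : |2 * (ψ x * ψ' x)| ≤ ψ x ^ 2 + ψ' x ^ 2 :=
    abs_le.2 ⟨by nlinarith [sq_nonneg (ψ x + ψ' x)], by nlinarith [sq_nonneg (ψ x - ψ' x)]⟩
  calc 2 * (ψ x * ψ' x) + 2 * V x * (ψ x * ψ' x) = (1 + V x) * (2 * (ψ x * ψ' x)) := by ring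
    _ ≤ |1 + V x| * |2 * (ψ x * ψ' x)| := by rw [← abs_mul]; exact le_abs_self _
    _ ≤ c * (ψ x ^ 2 + ψ' x ^ 2) :=
        mul_le_mul (hV x hx) hcross (abs_nonneg _) ((abs_nonneg _).trans (hV x hx))

section Decay

lemma mul_deriv_nonpos (h : IsSchrodingerSolutionOn V ψ ψ' (Ici a)) (hV : ∀ x ∈ Ici a, 0 ≤ V x)
    (hlim : Tendsto (fun x => ψ x * ψ' x) atTop (nhds 0)) (hx : a ≤ x) : ψ x * ψ' x ≤ 0 := by
  have hmono : MonotoneOn (fun u => ψ u * ψ' u) (Ici a) :=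
    monotoneOn_of_hasDerivWithinAt_nonneg (convex_Ici a)
      (fun u hu => (h.hasDerivAt_mul_deriv hu).continuousAt.continuousWithinAt)
      (fun u hu => (h.hasDerivAt_mul_deriv (interior_subset hu)).hasDerivWithinAt)
      (fun u hu => by have := hV u (interior_subset hu); positivity)
  refine ge_of_tendsto hlim ?_
  filter_upwards [eventually_ge_atTop x] with u hu
  exact hmono hx (hx.trans hu) hu

lemma sq_le_sq_of_le (h : IsSchrodingerSolutionOn V ψ ψ' (Ici a)) (hV : ∀ x ∈ Ici a, 0 ≤ V x)
    (hlim : Tendsto (fun x => ψ x * ψ' x) atTop (nhds 0)) (hx : a ≤ x) (hxy : x ≤ y) :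
    ψ y ^ 2 ≤ ψ x ^ 2 :=
  apply_le_apply_of_hasDerivAt_nonpos (f := fun u => ψ u ^ 2) hxy
    (fun _ hu => h.hasDerivAt_sq (hx.trans hu.1))
    (fun u hu => by linarith [h.mul_deriv_nonpos hV hlim (hx.trans hu.1)])

lemma deriv_sq_le_deriv_sq_of_le (h : IsSchrodingerSolutionOn V ψ ψ' (Ici a))
    (hV : ∀ x ∈ Ici a, 0 ≤ V x) (hlim : Tendsto (fun x => ψ x * ψ' x) atTop (nhds 0))
    (hx : a ≤ x) (hxy : x ≤ y) : ψ' y ^ 2 ≤ ψ' x ^ 2 := by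
  refine apply_le_apply_of_hasDerivAt_nonpos (f := fun u => ψ' u ^ 2) hxy
    (fun _ hu => h.hasDerivAt_deriv_sq (hx.trans hu.1)) (fun u hu => ?_)
  have hu : a ≤ u := hx.trans hu.1
  exact mul_nonpos_of_nonneg_of_nonpos (by linarith [hV u hu]) (h.mul_deriv_nonpos hV hlim hu)

lemma deriv_sq_le (h : IsSchrodingerSolutionOn V ψ ψ' (Ici a)) (hV : ∀ x ∈ Ici a, 0 ≤ V x)
    (hlim : Tendsto (fun x => ψ x * ψ' x) atTop (nhds 0)) (hx : a ≤ x) :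
    ψ' (x + 1) ^ 2 ≤ 2 * ψ (x + 1) ^ 2 + 2 * ψ x ^ 2 := by
  obtain ⟨u, hu, hslope⟩ := exists_hasDerivAt_eq_slope ψ ψ' (lt_add_one x)
    (fun u hu => (h.hasDerivAt u (hx.trans hu.1)).continuousAt.continuousWithinAt)
    (fun u hu => h.hasDerivAt u (hx.trans hu.1.le))
  have hslope : ψ' u = ψ (x + 1) - ψ x := by simpa using hslope
  calc ψ' (x + 1) ^ 2 ≤ ψ' u ^ 2 :=
        h.deriv_sq_le_deriv_sq_of_le hV hlim (hx.trans hu.1.le) hu.2.le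
    _ ≤ 2 * ψ (x + 1) ^ 2 + 2 * ψ x ^ 2 := by
        rw [hslope]; nlinarith [sq_nonneg (ψ (x + 1) + ψ x)]

/-- The quantity `g = 2ψψ' + cψ²` makes `e^{-cx} g` nondecreasing, and it tends to `0` because `ψ²`
is nonincreasing; so `g ≤ 0`. -/
lemma two_mul_mul_deriv_le (h : IsSchrodingerSolutionOn V ψ ψ' (Ici a)) (hc : 0 < c)
    (hV : ∀ x ∈ Ici a, c ^ 2 ≤ 2 * V x)
    (hlim : Tendsto (fun x => ψ x * ψ' x) atTop (nhds 0)) (hx : a ≤ x) :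
    2 * (ψ x * ψ' x) ≤ -c * ψ x ^ 2 := by
  have hV₀ : ∀ x ∈ Ici a, 0 ≤ V x := fun x hx => by nlinarith [hV x hx]
  have hderiv : ∀ u ∈ Ici a, HasDerivAt
      (fun u => Real.exp (-c * u) * (2 * (ψ u * ψ' u) + c * ψ u ^ 2))
      (Real.exp (-c * u) * (2 * ψ' u ^ 2 + (2 * V u - c ^ 2) * ψ u ^ 2)) u := fun u hu =>
    (((hasDerivAt_id u).const_mul (-c)).exp.mul
      (((h.hasDerivAt_mul_deriv hu).const_mul 2).add
        ((h.hasDerivAt_sq hu).const_mul c))).congr_deriv (by simp only [id, Pi.add_apply]; ring)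
  have hmono : MonotoneOn (fun u => Real.exp (-c * u) * (2 * (ψ u * ψ' u) + c * ψ u ^ 2)) (Ici a) :=
    monotoneOn_of_hasDerivWithinAt_nonneg (convex_Ici a)
      (fun u hu => (hderiv u hu).continuousAt.continuousWithinAt)
      (fun u hu => (hderiv u (interior_subset hu)).hasDerivWithinAt)
      (fun u hu => by
        have : 0 ≤ 2 * V u - c ^ 2 := sub_nonneg.2 (hV u (interior_subset hu))
        positivity)
  have hzero : Tendsto (fun u => Real.exp (-c * u) * (c * ψ x ^ 2)) atTop (nhds 0) := by
    have : Tendsto (fun u : ℝ => Real.exp (-(c * u))) atTop (nhds 0) :=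
      Real.tendsto_exp_neg_atTop_nhds_zero.comp (tendsto_id.const_mul_atTop hc)
    simpa using this.mul_const (c * ψ x ^ 2)
  have hle : Real.exp (-c * x) * (2 * (ψ x * ψ' x) + c * ψ x ^ 2) ≤ 0 := by
    refine ge_of_tendsto hzero ?_
    filter_upwards [eventually_ge_atTop x] with u hu
    refine (hmono hx (hx.trans hu) hu).trans ?_
    have hsq := h.sq_le_sq_of_le hV₀ hlim hx hu
    have hmul := h.mul_deriv_nonpos hV₀ hlim (hx.trans hu)
    exact mul_le_mul_of_nonneg_left (by nlinarith) (Real.exp_pos _).le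
  have := nonpos_of_mul_nonpos_right hle (Real.exp_pos _)
  linarith

theorem sq_le_sq_mul_exp (h : IsSchrodingerSolutionOn V ψ ψ' (Ici a)) (hc : 0 < c)
    (hV : ∀ x ∈ Ici a, c ^ 2 ≤ 2 * V x)
    (hlim : Tendsto (fun x => ψ x * ψ' x) atTop (nhds 0)) (hx : a ≤ x) :
    ψ x ^ 2 ≤ ψ a ^ 2 * Real.exp (-c * x - -c * a) :=
  le_mul_exp_of_deriv_le_mul (f := fun u => ψ u ^ 2) (κ := fun u => -c * u) (k := fun _ => -c) hx
    (fun _ hu => h.hasDerivAt_sq hu.1) (fun u _ => by simpa using (hasDerivAt_id u).const_mul (-c))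
    (fun _ hu => h.two_mul_mul_deriv_le hc hV hlim hu.1)

end Decay

end IsSchrodingerSolutionOn

/-! ### The Liouville–Green energy -/

/-- The energy of a solution of `ψ'' = Vψ` with `V < 0`. The Liouville–Green ansatz
`ψ ≈ (-V)^{-1/4} cos θ`, `θ' = √(-V)`, makes it constant to leading order. -/
noncomputable def liouvilleGreenEnergy (V V' ψ ψ' : ℝ → ℝ) (x : ℝ) : ℝ :=
  √(-V x) * ψ x ^ 2 + (ψ' x + V' x / (4 * V x) * ψ x) ^ 2 / √(-V x)

/-- The relative rate of change of the Liouville–Green energy is at most this error density divided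
by `√(-V)`. -/
noncomputable def liouvilleGreenError (V V' V'' : ℝ → ℝ) (x : ℝ) : ℝ :=
  V'' x / (4 * V x) - 5 * V' x ^ 2 / (16 * V x ^ 2)

lemma liouvilleGreenEnergy_nonneg (V V' ψ ψ' : ℝ → ℝ) (x : ℝ) :
    0 ≤ liouvilleGreenEnergy V V' ψ ψ' x := by
  unfold liouvilleGreenEnergy; positivity

lemma abs_two_mul_le_liouvilleGreenEnergy {V V' ψ ψ' : ℝ → ℝ} {x : ℝ} (hV : V x < 0) :
    |2 * ψ x * (ψ' x + V' x / (4 * V x) * ψ x)| ≤ liouvilleGreenEnergy V V' ψ ψ' x := by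
  unfold liouvilleGreenEnergy
  have hs : 0 < √(-V x) := Real.sqrt_pos.2 (neg_pos.2 hV)
  set s := √(-V x)
  set w := ψ' x + V' x / (4 * V x) * ψ x
  have hplus : s * ψ x ^ 2 + w ^ 2 / s + 2 * ψ x * w = (s * ψ x + w) ^ 2 / s := by
    field_simp
    ring
  have hminus : s * ψ x ^ 2 + w ^ 2 / s - 2 * ψ x * w = (s * ψ x - w) ^ 2 / s := by
    field_simp
    ring
  have := div_nonneg (sq_nonneg (s * ψ x + w)) hs.le
  have := div_nonneg (sq_nonneg (s * ψ x - w)) hs.le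
  exact abs_le.2 ⟨by linarith, by linarith⟩

namespace IsSchrodingerSolutionOn

variable {V V' V'' ψ ψ' Φ κ k : ℝ → ℝ} {s : Set ℝ} {a b x : ℝ}

lemma hasDerivAt_liouvilleGreenEnergy (h : IsSchrodingerSolutionOn V ψ ψ' s) (hx : x ∈ s)
    (hV : HasDerivAt V (V' x) x) (hV' : HasDerivAt V' (V'' x) x) (hneg : V x < 0) :
    HasDerivAt (liouvilleGreenEnergy V V' ψ ψ')
      (2 * ψ x * (ψ' x + V' x / (4 * V x) * ψ x) *
        (liouvilleGreenError V V' V'' x / √(-V x))) x := by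
  have hpos : 0 < -V x := neg_pos.2 hneg
  have hs : √(-V x) ≠ 0 := (Real.sqrt_pos.2 hpos).ne'
  have hsqrt := hV.neg.sqrt hpos.ne'
  have hquot : HasDerivAt (fun u => V' u / (4 * V u))
      ((V'' x * (4 * V x) - V' x * (4 * V' x)) / (4 * V x) ^ 2) x :=
    hV'.div (hV.const_mul 4) (by linarith)
  have hcorr := (h.hasDerivAt_deriv x hx).add (hquot.mul (h.hasDerivAt x hx))
  refine ((hsqrt.mul (h.hasDerivAt_sq hx)).add ((hcorr.pow 2).div hsqrt hs)).congr_deriv ?_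
  have hVs : V x = -√(-V x) ^ 2 := by rw [Real.sq_sqrt hpos.le, neg_neg]
  simp only [liouvilleGreenError, Pi.neg_apply, Pi.add_apply, Pi.mul_apply, Pi.pow_apply,
    Nat.cast_ofNat, Nat.add_one_sub_one, pow_one]
  generalize √(-V x) = r at *
  rw [hVs]
  field_simp
  ring

theorem liouvilleGreenEnergy_le (h : IsSchrodingerSolutionOn V ψ ψ' (Icc a b)) (hab : a ≤ b)
    (hV : ∀ x ∈ Icc a b, HasDerivAt V (V' x) x) (hV' : ∀ x ∈ Icc a b, HasDerivAt V' (V'' x) x)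
    (hneg : ∀ x ∈ Icc a b, V x < 0) (hκ : ∀ x ∈ Icc a b, HasDerivAt κ (k x) x)
    (herr : ∀ x ∈ Icc a b, |liouvilleGreenError V V' V'' x| ≤ k x * √(-V x)) :
    liouvilleGreenEnergy V V' ψ ψ' b ≤
      liouvilleGreenEnergy V V' ψ ψ' a * Real.exp (κ b - κ a) := by
  refine le_mul_exp_of_deriv_le_mul hab
    (fun x hx => h.hasDerivAt_liouvilleGreenEnergy hx (hV x hx) (hV' x hx) (hneg x hx)) hκ
    (fun x hx => (le_abs_self _).trans ?_)
  have hs : 0 < √(-V x) := Real.sqrt_pos.2 (neg_pos.2 (hneg x hx))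
  rw [abs_mul, abs_div, abs_of_pos hs, mul_comm (k x)]
  exact mul_le_mul (abs_two_mul_le_liouvilleGreenEnergy (hneg x hx))
    ((div_le_iff₀ hs).2 (herr x hx)) (by positivity) (liouvilleGreenEnergy_nonneg ..)

/-- Two integrations by parts in `Φ = ∫ ψ = ∫ ψ''/V`. -/
lemma hasDerivAt_primitive_sub (h : IsSchrodingerSolutionOn V ψ ψ' s) (hx : x ∈ s)
    (hΦ : HasDerivAt Φ (ψ x) x) (hV : HasDerivAt V (V' x) x) (hV' : HasDerivAt V' (V'' x) x)
    (hne : V x ≠ 0) :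
    HasDerivAt (fun u => Φ u - ψ' u / V u - ψ u * V' u / V u ^ 2)
      (ψ x * (2 * V' x ^ 2 / V x ^ 3 - V'' x / V x ^ 2)) x := by
  have hfirst := (h.hasDerivAt_deriv x hx).div hV hne
  have hsecond := ((h.hasDerivAt x hx).mul hV').div (hV.pow 2) (pow_ne_zero 2 hne)
  refine ((hΦ.sub hfirst).sub hsecond).congr_deriv ?_
  simp only [Pi.pow_apply, Pi.mul_apply]
  field_simp
  ring

end IsSchrodingerSolutionOn

/-! ### The oscillator equation in edge coordinates -/

/-- The oscillator potential in the coordinate `x` at the soft edge, with `N = n^{1/3}`; it tends to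
the Airy potential `x` as `N → ∞` and is even about the centre `-2N²` of the spectrum. -/
noncomputable def edgePotential (N x : ℝ) : ℝ := x + x ^ 2 / (4 * N ^ 2) - 1 / (2 * N)

/-- `ψ` is an edge-scaled oscillator function of even index at scale `N`, with derivative `ψ'` and
with primitive `Φ` vanishing at the centre `-2N²` of the spectrum. Evenness about the centre is
recorded by the two initial values there, the normalization by the bound on `ψ(-2N²)²`. -/
structure IsEdgeSolution (N : ℝ) (ψ ψ' Φ : ℝ → ℝ) : Prop extends
    IsSchrodingerSolutionOn (edgePotential N) ψ ψ' univ where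
  one_le : 1 ≤ N
  hasDerivAt_primitive : ∀ x, HasDerivAt Φ (ψ x) x
  deriv_center : ψ' (-(2 * N ^ 2)) = 0
  primitive_center : Φ (-(2 * N ^ 2)) = 0
  sq_center_le : ψ (-(2 * N ^ 2)) ^ 2 ≤ 1 / N
  tendsto_mul_deriv : Tendsto (fun x => ψ x * ψ' x) atTop (nhds 0)

/-- The weight `(1 + |x|)^{1/4}`, the regularized form of the factors `|x|^{1/4}` in the bounds. -/
noncomputable def edgeWeight (x : ℝ) : ℝ := (1 + |x|) ^ ((1 : ℝ) / 4)

section EdgePotential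

variable {N x : ℝ}

lemma hasDerivAt_edgePotential (N x : ℝ) :
    HasDerivAt (edgePotential N) (1 + x / (2 * N ^ 2)) x :=
  (((hasDerivAt_id x).add ((hasDerivAt_pow 2 x).div_const (4 * N ^ 2))).sub_const
    (1 / (2 * N))).congr_deriv (by push_cast; ring)

lemma hasDerivAt_deriv_edgePotential (N x : ℝ) :
    HasDerivAt (fun u => 1 + u / (2 * N ^ 2)) (1 / (2 * N ^ 2)) x :=
  ((hasDerivAt_id x).div_const (2 * N ^ 2)).const_add 1

lemma one_div_two_mul_le_half (hN : 1 ≤ N) : 1 / (2 * N) ≤ 1 / 2 :=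
  one_div_le_one_div_of_le two_pos (by linarith)

lemma edgePotential_le_half (hN : 1 ≤ N) (hx : -(2 * N ^ 2) ≤ x) (hx₀ : x ≤ 0) :
    edgePotential N x ≤ x / 2 := by
  have hsq : x ^ 2 / (4 * N ^ 2) ≤ -x / 2 := by
    rw [div_le_div_iff₀ (by positivity) two_pos]
    nlinarith
  have : 0 ≤ 1 / (2 * N) := by positivity
  unfold edgePotential
  linarith

lemma two_mul_le_edgePotential (hN : 1 ≤ N) (hx : x ≤ -1) : 2 * x ≤ edgePotential N x := by
  have : 0 ≤ x ^ 2 / (4 * N ^ 2) := by positivity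
  have := one_div_two_mul_le_half hN
  unfold edgePotential
  linarith

lemma abs_edgePotential_le (hN : 1 ≤ N) : |edgePotential N x| ≤ (1 + |x|) ^ 2 := by
  have hsq : x ^ 2 / (4 * N ^ 2) ≤ |x| ^ 2 := by
    rw [sq_abs]
    exact div_le_self (sq_nonneg x) (by nlinarith)
  have : 0 ≤ x ^ 2 / (4 * N ^ 2) := by positivity
  have : 0 ≤ 1 / (2 * N) := by positivity
  have := one_div_two_mul_le_half hN
  unfold edgePotential
  exact abs_le.2 ⟨by nlinarith [neg_abs_le x, abs_nonneg x], by
    nlinarith [le_abs_self x, abs_nonneg x]⟩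

lemma one_half_le_edgePotential (hN : 1 ≤ N) (hx : 1 ≤ x) : 1 / 2 ≤ edgePotential N x := by
  have : 0 ≤ x ^ 2 / (4 * N ^ 2) := by positivity
  have := one_div_two_mul_le_half hN
  unfold edgePotential
  linarith

lemma abs_deriv_edgePotential_le (hN : 1 ≤ N) (hx : -(2 * N ^ 2) ≤ x) (hx₀ : x ≤ 0) :
    |1 + x / (2 * N ^ 2)| ≤ 1 := by
  have : -1 ≤ x / (2 * N ^ 2) := by
    rw [le_div_iff₀ (by positivity)]
    linarith
  have : x / (2 * N ^ 2) ≤ 0 := div_nonpos_of_nonpos_of_nonneg hx₀ (by positivity)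
  exact abs_le.2 ⟨by linarith, by linarith⟩

lemma one_add_div_center (hN : N ≠ 0) : 1 + -(2 * N ^ 2) / (2 * N ^ 2) = 0 := by
  field_simp
  ring

lemma abs_liouvilleGreenError_edgePotential_le (hN : 1 ≤ N) (hx : -(2 * N ^ 2) ≤ x)
    (hx₁ : x ≤ -1) :
    |liouvilleGreenError (edgePotential N) (fun u => 1 + u / (2 * N ^ 2))
      (fun _ => 1 / (2 * N ^ 2)) x| ≤ 7 / 4 / x ^ 2 := by
  have hV : -x / 2 ≤ -edgePotential N x := by
    linarith [edgePotential_le_half hN hx (by linarith)]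
  have hx₀ : 0 < -x := by linarith
  have hpos : 0 < -edgePotential N x := by linarith
  have hfirst : |1 / (2 * N ^ 2) / (4 * edgePotential N x)| ≤ 1 / 2 / x ^ 2 := by
    rw [abs_div, abs_of_pos (by positivity : 0 < 1 / (2 * N ^ 2)), abs_mul, ← abs_neg
      (edgePotential N x), abs_of_pos hpos, abs_of_pos (four_pos (α := ℝ))]
    calc 1 / (2 * N ^ 2) / (4 * -edgePotential N x) ≤ 1 / -x / (4 * (-x / 2)) := by
          gcongr
          linarith
      _ = 1 / 2 / x ^ 2 := by field_simp; ring
  have hsecond : |5 * (1 + x / (2 * N ^ 2)) ^ 2 / (16 * edgePotential N x ^ 2)| ≤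
      5 / 4 / x ^ 2 := by
    have hV' : (1 + x / (2 * N ^ 2)) ^ 2 ≤ 1 :=
      (sq_le_one_iff_abs_le_one _).2 (abs_deriv_edgePotential_le hN hx (by linarith))
    rw [abs_of_nonneg (by positivity), ← neg_sq (edgePotential N x)]
    calc 5 * (1 + x / (2 * N ^ 2)) ^ 2 / (16 * (-edgePotential N x) ^ 2)
        ≤ 5 * 1 / (16 * (-x / 2) ^ 2) := by gcongr
      _ = 5 / 4 / x ^ 2 := by field_simp; ring
  calc _ ≤ 1 / 2 / x ^ 2 + 5 / 4 / x ^ 2 := (abs_sub _ _).trans (add_le_add hfirst hsecond)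
    _ = 7 / 4 / x ^ 2 := by ring

lemma abs_liouvilleGreenPrimitiveError_edgePotential_le (hN : 1 ≤ N) (hx : -(2 * N ^ 2) ≤ x)
    (hx₁ : x ≤ -1) :
    |2 * (1 + x / (2 * N ^ 2)) ^ 2 / edgePotential N x ^ 3 -
      1 / (2 * N ^ 2) / edgePotential N x ^ 2| ≤ 20 / (-x) ^ 3 := by
  have hV : -x / 2 ≤ -edgePotential N x := by
    linarith [edgePotential_le_half hN hx (by linarith)]
  have hx₀ : 0 < -x := by linarith
  have hpos : 0 < -edgePotential N x := by linarith
  have hV' : (1 + x / (2 * N ^ 2)) ^ 2 ≤ 1 := (sq_le_one_iff_abs_le_one _).2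
    (abs_deriv_edgePotential_le hN hx (by linarith))
  have hfirst : |2 * (1 + x / (2 * N ^ 2)) ^ 2 / edgePotential N x ^ 3| ≤ 16 / (-x) ^ 3 := by
    rw [abs_div, abs_of_nonneg (by positivity), abs_pow, abs_of_neg (by linarith)]
    calc 2 * (1 + x / (2 * N ^ 2)) ^ 2 / (-edgePotential N x) ^ 3 ≤ 2 * 1 / (-x / 2) ^ 3 := by
          gcongr
      _ = 16 / (-x) ^ 3 := by field_simp; ring
  have hsecond : |1 / (2 * N ^ 2) / edgePotential N x ^ 2| ≤ 4 / (-x) ^ 3 := by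
    rw [abs_of_nonneg (by positivity), ← neg_sq (edgePotential N x)]
    calc 1 / (2 * N ^ 2) / (-edgePotential N x) ^ 2 ≤ 1 / -x / (-x / 2) ^ 2 := by
          gcongr
          linarith
      _ = 4 / (-x) ^ 3 := by field_simp; ring
  calc _ ≤ 16 / (-x) ^ 3 + 4 / (-x) ^ 3 := (abs_sub _ _).trans (add_le_add hfirst hsecond)
    _ = 20 / (-x) ^ 3 := by ring

end EdgePotential

section EdgeWeight

variable {N x : ℝ}

lemma edgeWeight_pow_four (x : ℝ) : edgeWeight x ^ 4 = 1 + |x| := by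
  rw [edgeWeight, ← Real.rpow_natCast, ← Real.rpow_mul (by positivity)]
  norm_num

lemma one_le_edgeWeight (x : ℝ) : 1 ≤ edgeWeight x :=
  Real.one_le_rpow (by linarith [abs_nonneg x]) (by norm_num)

lemma edgeWeight_pos (x : ℝ) : 0 < edgeWeight x := one_pos.trans_le (one_le_edgeWeight x)

lemma edgeWeight_le_one_add_abs (x : ℝ) : edgeWeight x ≤ 1 + |x| :=
  edgeWeight_pow_four x ▸ le_self_pow₀ (one_le_edgeWeight x) four_ne_zero

lemma edgeWeight_pow_four_le (hx : x ≤ -1) : edgeWeight x ^ 4 ≤ 2 * -x := by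
  rw [edgeWeight_pow_four, abs_of_nonpos (by linarith)]
  linarith

lemma edgeWeight_pow_four_div_four_le (hN : 1 ≤ N) (hx : -(2 * N ^ 2) ≤ x) (hx₁ : x ≤ -1) :
    edgeWeight x ^ 4 / 4 ≤ -edgePotential N x := by
  linarith [edgePotential_le_half hN hx (by linarith), edgeWeight_pow_four_le hx₁]

lemma sqrt_neg_edgePotential_equiv (hN : 1 ≤ N) (hx : -(2 * N ^ 2) ≤ x) (hx₁ : x ≤ -1) :
    edgeWeight x ^ 2 ≤ 2 * √(-edgePotential N x) ∧
      √(-edgePotential N x) ≤ 3 / 2 * edgeWeight x ^ 2 := by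
  have hV := edgeWeight_pow_four_div_four_le hN hx hx₁
  have hV' := two_mul_le_edgePotential hN hx₁
  have hsq := Real.sq_sqrt (hV.trans' (by positivity))
  have hweight' : -x ≤ edgeWeight x ^ 4 := by
    rw [edgeWeight_pow_four]; linarith [neg_le_abs x]
  exact ⟨abs_le_of_sq_le_sq' (by nlinarith) (by positivity) |>.2,
    abs_le_of_sq_le_sq' (by nlinarith) (by positivity) |>.2⟩

end EdgeWeight

namespace IsEdgeSolution

variable {N : ℝ} {ψ ψ' Φ : ℝ → ℝ} {x : ℝ}

/-! ### Bounds in the oscillatory region -/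

section Left

lemma liouvilleGreenEnergy_center_le (h : IsEdgeSolution N ψ ψ' Φ) :
    liouvilleGreenEnergy (edgePotential N) (fun u => 1 + u / (2 * N ^ 2)) ψ ψ' (-(2 * N ^ 2)) ≤
      2 := by
  have hN := h.one_le
  have hN₀ : 0 < N := by linarith
  have hsqrt : √(-edgePotential N (-(2 * N ^ 2))) ≤ 2 * N := by
    refine Real.sqrt_le_iff.2 ⟨by positivity, ?_⟩
    nlinarith [two_mul_le_edgePotential hN (by nlinarith : -(2 * N ^ 2) ≤ -1)]
  rw [liouvilleGreenEnergy, one_add_div_center hN₀.ne', h.deriv_center]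
  calc √(-edgePotential N (-(2 * N ^ 2))) * ψ (-(2 * N ^ 2)) ^ 2 +
        (0 + 0 / (4 * edgePotential N (-(2 * N ^ 2))) * ψ (-(2 * N ^ 2))) ^ 2 /
          √(-edgePotential N (-(2 * N ^ 2)))
      = √(-edgePotential N (-(2 * N ^ 2))) * ψ (-(2 * N ^ 2)) ^ 2 := by simp
    _ ≤ 2 * N * (1 / N) := by gcongr; exact h.sq_center_le
    _ = 2 := by field_simp

lemma liouvilleGreenEnergy_le (h : IsEdgeSolution N ψ ψ' Φ) (hx : -(2 * N ^ 2) ≤ x)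
    (hx₁ : x ≤ -1) :
    liouvilleGreenEnergy (edgePotential N) (fun u => 1 + u / (2 * N ^ 2)) ψ ψ' x ≤ 41 := by
  have hN := h.one_le
  have hV : ∀ u ∈ Icc (-(2 * N ^ 2)) x, edgePotential N u ≤ -(1 / 2) := fun u hu => by
    linarith [edgePotential_le_half hN hu.1 (by linarith [hu.2]), hu.2]
  have hgrowth := (h.toIsSchrodingerSolutionOn.mono (subset_univ _)).liouvilleGreenEnergy_le hx
    (κ := fun u => -3 / u) (k := fun u => 3 / u ^ 2) (fun u _ => hasDerivAt_edgePotential N u)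
    (fun u _ => hasDerivAt_deriv_edgePotential N u) (fun u hu => by linarith [hV u hu])
    (fun u hu => by
      have hu₀ : u ≠ 0 := by linarith [hu.2]
      simpa [div_eq_mul_inv] using (hasDerivAt_inv hu₀).const_mul (-3))
    (fun u hu => by
      have hsqrt : 7 / 12 ≤ √(-edgePotential N u) :=
        Real.le_sqrt_of_sq_le (by linarith [hV u hu])
      calc _ ≤ 7 / 4 / u ^ 2 :=
            abs_liouvilleGreenError_edgePotential_le hN hu.1 (hu.2.trans hx₁)
        _ = 3 / u ^ 2 * (7 / 12) := by ring
        _ ≤ 3 / u ^ 2 * √(-edgePotential N u) := by gcongr)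
  have hexp : Real.exp (-3 / x - -3 / -(2 * N ^ 2)) ≤ Real.exp 3 := by
    have : -3 / x ≤ 3 := by rw [div_le_iff_of_neg (by linarith)]; linarith
    have : 0 ≤ -3 / -(2 * N ^ 2) := div_nonneg_of_nonpos (by norm_num) (by nlinarith)
    gcongr
    linarith
  have hexp_three : Real.exp 3 ≤ 41 / 2 := by
    have : Real.exp 1 ^ 3 ≤ 2.72 ^ 3 := by gcongr; linarith [Real.exp_one_lt_d9]
    rw [show (3 : ℝ) = (3 : ℕ) * 1 by norm_num, Real.exp_nat_mul]
    exact this.trans (by norm_num)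
  calc _ ≤ 2 * (41 / 2) := hgrowth.trans (by
        gcongr
        · exact h.liouvilleGreenEnergy_center_le
        · exact hexp.trans hexp_three)
    _ = 41 := by norm_num

lemma sq_mul_edgeWeight_sq_le (h : IsEdgeSolution N ψ ψ' Φ) (hx : -(2 * N ^ 2) ≤ x)
    (hx₁ : x ≤ -1) : ψ x ^ 2 * edgeWeight x ^ 2 ≤ 82 := by
  have henergy := h.liouvilleGreenEnergy_le hx hx₁
  have hsqrt := (sqrt_neg_edgePotential_equiv h.one_le hx hx₁).1
  have hrest : 0 ≤ (ψ' x + (1 + x / (2 * N ^ 2)) / (4 * edgePotential N x) * ψ x) ^ 2 /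
    √(-edgePotential N x) := by positivity
  unfold liouvilleGreenEnergy at henergy
  nlinarith [sq_nonneg (ψ x)]

lemma deriv_sq_le_left (h : IsEdgeSolution N ψ ψ' Φ) (hx : -(2 * N ^ 2) ≤ x) (hx₁ : x ≤ -1) :
    ψ' x ^ 2 ≤ 225 * edgeWeight x ^ 2 := by
  have hV := edgePotential_le_half h.one_le hx (by linarith)
  have henergy := h.liouvilleGreenEnergy_le hx hx₁
  have hsqrt := (sqrt_neg_edgePotential_equiv h.one_le hx hx₁).2
  have hs : 0 < √(-edgePotential N x) := Real.sqrt_pos.2 (by linarith)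
  have hψ := h.sq_mul_edgeWeight_sq_le hx hx₁
  have hw : 1 ≤ edgeWeight x ^ 2 := one_le_pow₀ (one_le_edgeWeight x)
  set c := (1 + x / (2 * N ^ 2)) / (4 * edgePotential N x)
  have hc : |c| ≤ 1 / 2 := by
    rw [abs_div, div_le_iff₀ (abs_pos.2 (by linarith)), abs_of_neg (by linarith :
      4 * edgePotential N x < 0)]
    linarith [abs_deriv_edgePotential_le h.one_le hx (by linarith)]
  have hcorrected : (ψ' x + c * ψ x) ^ 2 ≤ 41 * (3 / 2 * edgeWeight x ^ 2) := by
    have : (ψ' x + c * ψ x) ^ 2 / √(-edgePotential N x) ≤ 41 := by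
      have : 0 ≤ √(-edgePotential N x) * ψ x ^ 2 := by positivity
      unfold liouvilleGreenEnergy at henergy
      linarith
    rw [div_le_iff₀ hs] at this
    linarith
  have hψ₁ : ψ x ^ 2 ≤ 82 := by nlinarith [sq_nonneg (ψ x)]
  have hcψ : (c * ψ x) ^ 2 ≤ 41 / 2 := by
    rw [mul_pow, ← sq_abs c]
    nlinarith [abs_nonneg c, sq_nonneg (ψ x)]
  nlinarith [sq_nonneg (ψ' x + 2 * (c * ψ x))]

lemma abs_le_left (h : IsEdgeSolution N ψ ψ' Φ) (hx : -(2 * N ^ 2) ≤ x) (hx₁ : x ≤ -1) :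
    |ψ x| ≤ 15 / edgeWeight x := by
  rw [le_div_iff₀ (edgeWeight_pos x), ← abs_of_pos (edgeWeight_pos x), ← abs_mul]
  refine abs_le_of_sq_le_sq ?_ (by norm_num)
  linarith [h.sq_mul_edgeWeight_sq_le hx hx₁, mul_pow (ψ x) (edgeWeight x) 2]

lemma abs_deriv_le_left (h : IsEdgeSolution N ψ ψ' Φ) (hx : -(2 * N ^ 2) ≤ x) (hx₁ : x ≤ -1) :
    |ψ' x| ≤ 15 * edgeWeight x := by
  refine abs_le_of_sq_le_sq ?_ (by linarith [edgeWeight_pos x])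
  linarith [h.deriv_sq_le_left hx hx₁, mul_pow 15 (edgeWeight x) 2]

lemma abs_le_left_const (h : IsEdgeSolution N ψ ψ' Φ) (hx : -(2 * N ^ 2) ≤ x) (hx₁ : x ≤ -1) :
    |ψ x| ≤ 15 :=
  (h.abs_le_left hx hx₁).trans (div_le_self (by norm_num) (one_le_edgeWeight x))

lemma abs_primitive_sub_le_left (h : IsEdgeSolution N ψ ψ' Φ) (hx : -(2 * N ^ 2) ≤ x)
    (hx₁ : x ≤ -1) :
    |Φ x - ψ' x / edgePotential N x - ψ x * (1 + x / (2 * N ^ 2)) / edgePotential N x ^ 2| ≤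
      150 / x ^ 2 := by
  have hN := h.one_le
  have hV : ∀ u ∈ Icc (-(2 * N ^ 2)) x, -u / 2 ≤ -edgePotential N u := fun u hu => by
    linarith [edgePotential_le_half hN hu.1 (by linarith [hu.2])]
  have hvariation := norm_sub_le_sub_of_norm_deriv_le (g := fun u => 150 / u ^ 2)
    (g' := fun u => 300 / (-u) ^ 3) hx
    (fun u hu => h.hasDerivAt_primitive_sub (V'' := fun _ => 1 / (2 * N ^ 2))
      (mem_univ u) (h.hasDerivAt_primitive u)
      (hasDerivAt_edgePotential N u) (hasDerivAt_deriv_edgePotential N u)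
      (by linarith [hV u hu, hu.2]))
    (fun u hu => by
      have hu₀ : u ≠ 0 := by linarith [hu.2]
      refine ((hasDerivAt_const u (150 : ℝ)).div (hasDerivAt_pow 2 u)
        (pow_ne_zero 2 hu₀)).congr_deriv ?_
      push_cast
      field_simp
      ring)
    (fun u hu => by
      rw [Real.norm_eq_abs, abs_mul]
      calc _ ≤ 15 * (20 / (-u) ^ 3) := mul_le_mul (h.abs_le_left_const hu.1 (hu.2.trans hx₁))
            (abs_liouvilleGreenPrimitiveError_edgePotential_le hN hu.1 (hu.2.trans hx₁))
            (abs_nonneg _) (by norm_num)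
        _ = 300 / (-u) ^ 3 := by ring)
  have hcenter : 0 ≤ 150 / (-(2 * N ^ 2)) ^ 2 := by positivity
  simp only [h.primitive_center, h.deriv_center, one_add_div_center (by linarith : N ≠ 0),
    zero_div, mul_zero, sub_zero, Real.norm_eq_abs] at hvariation
  linarith

lemma abs_deriv_div_edgePotential_le_left (h : IsEdgeSolution N ψ ψ' Φ) (hx : -(2 * N ^ 2) ≤ x)
    (hx₁ : x ≤ -1) : |ψ' x / edgePotential N x| ≤ 60 / edgeWeight x ^ 3 := by
  have hw := edgeWeight_pos x
  have hV := edgeWeight_pow_four_div_four_le h.one_le hx hx₁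
  have hpos : 0 < -edgePotential N x := hV.trans_lt' (by positivity)
  rw [abs_div, abs_of_neg (by linarith : edgePotential N x < 0)]
  calc |ψ' x| / -edgePotential N x ≤ 15 * edgeWeight x / (edgeWeight x ^ 4 / 4) := by
        gcongr
        exact h.abs_deriv_le_left hx hx₁
    _ = 60 / edgeWeight x ^ 3 := by field_simp; ring

lemma abs_primitive_le_left (h : IsEdgeSolution N ψ ψ' Φ) (hx : -(2 * N ^ 2) ≤ x)
    (hx₁ : x ≤ -1) : |Φ x| ≤ 900 / edgeWeight x ^ 3 := by
  have hw := one_le_edgeWeight x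
  have hx₀ : edgeWeight x ^ 4 / 2 ≤ -x := by linarith [edgeWeight_pow_four_le hx₁]
  have hpow : 1 / edgeWeight x ^ 8 ≤ 1 / edgeWeight x ^ 3 :=
    one_div_le_one_div_of_le (by positivity) (pow_le_pow_right₀ hw (by norm_num))
  have hfirst := h.abs_deriv_div_edgePotential_le_left hx hx₁
  have hsecond : |ψ x * (1 + x / (2 * N ^ 2)) / edgePotential N x ^ 2| ≤
      240 * (1 / edgeWeight x ^ 8) := by
    have hV := edgeWeight_pow_four_div_four_le h.one_le hx hx₁
    rw [abs_div, abs_mul, abs_of_nonneg (sq_nonneg (edgePotential N x)),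
      ← neg_sq (edgePotential N x)]
    calc |ψ x| * |1 + x / (2 * N ^ 2)| / (-edgePotential N x) ^ 2
        ≤ 15 * 1 / (edgeWeight x ^ 4 / 4) ^ 2 := by
          gcongr
          · exact h.abs_le_left_const hx hx₁
          · exact abs_deriv_edgePotential_le h.one_le hx (by linarith)
      _ = 240 * (1 / edgeWeight x ^ 8) := by field_simp; ring
  have hrest : 150 / x ^ 2 ≤ 600 * (1 / edgeWeight x ^ 8) := by
    rw [← neg_sq]
    calc 150 / (-x) ^ 2 ≤ 150 / (edgeWeight x ^ 4 / 2) ^ 2 := by gcongr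
      _ = 600 * (1 / edgeWeight x ^ 8) := by field_simp; ring
  have hsub := h.abs_primitive_sub_le_left hx hx₁
  calc |Φ x| ≤ 150 / x ^ 2 + |ψ' x / edgePotential N x| +
        |ψ x * (1 + x / (2 * N ^ 2)) / edgePotential N x ^ 2| := by
        linarith [abs_sub_abs_le_abs_sub (Φ x) (ψ' x / edgePotential N x),
          abs_sub_abs_le_abs_sub (Φ x - ψ' x / edgePotential N x)
            (ψ x * (1 + x / (2 * N ^ 2)) / edgePotential N x ^ 2)]
    _ ≤ 600 * (1 / edgeWeight x ^ 3) + 60 / edgeWeight x ^ 3 +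
        240 * (1 / edgeWeight x ^ 3) := by linarith
    _ = 900 / edgeWeight x ^ 3 := by ring

end Left

/-! ### Bounds in the decay region -/

section Right

lemma sq_add_deriv_sq_le_of_le_two (h : IsEdgeSolution N ψ ψ' Φ) (hx : -1 ≤ x) (hx₂ : x ≤ 2) :
    ψ x ^ 2 + ψ' x ^ 2 ≤ 675 * Real.exp 15 := by
  have hN := h.one_le
  have hstart : ψ (-1) ^ 2 + ψ' (-1) ^ 2 ≤ 675 := by
    have hN₂ : -(2 * N ^ 2) ≤ -1 := by nlinarith
    have hψ := h.sq_mul_edgeWeight_sq_le hN₂ le_rfl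
    have hψ' := h.deriv_sq_le_left hN₂ le_rfl
    have hw : edgeWeight (-1) ^ 2 ≤ 2 := by
      nlinarith [edgeWeight_pow_four_le (le_refl (-1 : ℝ)), sq_nonneg (edgeWeight (-1) ^ 2 - 2)]
    nlinarith [one_le_pow₀ (one_le_edgeWeight (-1)) (n := 2), sq_nonneg (ψ (-1))]
  have hV : ∀ u ∈ Icc (-1) x, |1 + edgePotential N u| ≤ 5 := fun u hu => by
    have : u ^ 2 / (4 * N ^ 2) ≤ 1 := by
      rw [div_le_one (by positivity)]
      nlinarith [hu.1, hu.2]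
    have : 0 ≤ u ^ 2 / (4 * N ^ 2) := by positivity
    have : 0 ≤ 1 / (2 * N) := by positivity
    have := one_div_two_mul_le_half hN
    unfold edgePotential
    exact abs_le.2 ⟨by linarith [hu.1], by linarith [hu.2]⟩
  refine ((h.toIsSchrodingerSolutionOn.mono (subset_univ _)).sq_add_deriv_sq_le hx hV).trans ?_
  gcongr
  linarith

lemma sq_le_right (h : IsEdgeSolution N ψ ψ' Φ) (hx : -1 ≤ x) :
    ψ x ^ 2 ≤ 675 * Real.exp (17 - x) := by
  obtain hx₁ | hx₁ := le_total x 1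
  · have : Real.exp 15 ≤ Real.exp (17 - x) := Real.exp_le_exp.2 (by linarith)
    linarith [h.sq_add_deriv_sq_le_of_le_two hx (by linarith), sq_nonneg (ψ' x)]
  calc ψ x ^ 2 ≤ ψ 1 ^ 2 * Real.exp (-1 * x - -1 * 1) :=
        (h.toIsSchrodingerSolutionOn.mono (subset_univ _)).sq_le_sq_mul_exp one_pos
          (fun u hu => by linarith [one_half_le_edgePotential h.one_le hu])
          h.tendsto_mul_deriv hx₁
    _ ≤ 675 * Real.exp 15 * Real.exp (-1 * x - -1 * 1) := by
        gcongr
        linarith [h.sq_add_deriv_sq_le_of_le_two (x := 1) (by norm_num) (by norm_num),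
          sq_nonneg (ψ' 1)]
    _ = 675 * Real.exp (16 - x) := by rw [mul_assoc, ← Real.exp_add]; ring_nf
    _ ≤ 675 * Real.exp (17 - x) := by gcongr; norm_num

lemma deriv_sq_le_right (h : IsEdgeSolution N ψ ψ' Φ) (hx : -1 ≤ x) :
    ψ' x ^ 2 ≤ 2700 * Real.exp (18 - x) := by
  obtain hx₂ | hx₂ := le_total x 2
  · have : Real.exp 15 ≤ Real.exp (18 - x) := Real.exp_le_exp.2 (by linarith)
    linarith [h.sq_add_deriv_sq_le_of_le_two hx hx₂, sq_nonneg (ψ x), Real.exp_pos 15]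
  have hdecay := (h.toIsSchrodingerSolutionOn.mono (subset_univ _)).deriv_sq_le (a := 1)
    (fun u hu => by linarith [one_half_le_edgePotential h.one_le hu]) h.tendsto_mul_deriv
    (by linarith : 1 ≤ x - 1)
  rw [sub_add_cancel] at hdecay
  have hψ := h.sq_le_right hx
  have hψ₁ := h.sq_le_right (by linarith : -1 ≤ x - 1)
  have : Real.exp (17 - x) ≤ Real.exp (18 - x) := Real.exp_le_exp.2 (by linarith)
  rw [show 17 - (x - 1) = 18 - x by ring] at hψ₁
  linarith

lemma abs_le_right (h : IsEdgeSolution N ψ ψ' Φ) (hx : -1 ≤ x) :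
    |ψ x| ≤ 52 * Real.exp 9 * Real.exp (-x / 2) := by
  refine abs_le_of_sq_le_sq ?_ (by positivity)
  rw [mul_assoc, ← Real.exp_add, mul_pow, ← Real.exp_nat_mul,
    show ((2 : ℕ) : ℝ) * (9 + -x / 2) = 18 - x by push_cast; ring]
  have : Real.exp (17 - x) ≤ Real.exp (18 - x) := Real.exp_le_exp.2 (by linarith)
  linarith [h.sq_le_right hx, Real.exp_pos (18 - x)]

lemma abs_deriv_le_right (h : IsEdgeSolution N ψ ψ' Φ) (hx : -1 ≤ x) :
    |ψ' x| ≤ 52 * Real.exp 9 * Real.exp (-x / 2) := by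
  refine abs_le_of_sq_le_sq ?_ (by positivity)
  rw [mul_assoc, ← Real.exp_add, mul_pow, ← Real.exp_nat_mul,
    show ((2 : ℕ) : ℝ) * (9 + -x / 2) = 18 - x by push_cast; ring]
  linarith [h.deriv_sq_le_right hx, Real.exp_pos (18 - x)]

lemma exp_one_half_le_two : Real.exp (1 / 2) ≤ 2 := by
  have hsq : Real.exp (1 / 2) ^ 2 = Real.exp 1 := by rw [← Real.exp_nat_mul]; norm_num
  exact abs_le_of_sq_le_sq' (by linarith [Real.exp_one_lt_d9]) two_pos.le |>.2

lemma one_add_abs_pow_three_mul_exp_le (hx : -1 ≤ x) :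
    (1 + |x|) ^ 3 * Real.exp (-x / 2) ≤ 48 := by
  obtain hx₀ | hx₀ := le_total 0 x
  · have hexp := Real.sum_le_exp_of_nonneg (by positivity : 0 ≤ x / 2) 4
    simp only [Finset.sum_range_succ, Finset.sum_range_zero, Nat.factorial] at hexp
    rw [abs_of_nonneg hx₀, show -x / 2 = -(x / 2) by ring, Real.exp_neg, ← div_eq_mul_inv,
      div_le_iff₀ (Real.exp_pos _)]
    norm_num at hexp
    nlinarith [sq_nonneg x]
  · calc (1 + |x|) ^ 3 * Real.exp (-x / 2) ≤ (1 + 1) ^ 3 * Real.exp (1 / 2) := by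
          rw [abs_of_nonpos hx₀]
          gcongr <;> linarith
      _ ≤ 48 := by linarith [exp_one_half_le_two]

lemma abs_primitive_le_right (h : IsEdgeSolution N ψ ψ' Φ) (hx : -1 ≤ x) :
    |Φ x| ≤ 900 + 208 * Real.exp 9 := by
  have hstart : |Φ (-1)| ≤ 900 :=
    (h.abs_primitive_le_left (by nlinarith [h.one_le]) le_rfl).trans
      (div_le_self (by norm_num) (one_le_pow₀ (one_le_edgeWeight _)))
  have hvariation := norm_sub_le_sub_of_norm_deriv_le hx
    (fun u _ => h.hasDerivAt_primitive u)
    (g := fun u => -(104 * Real.exp 9 * Real.exp (-u / 2)))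
    (g' := fun u => 52 * Real.exp 9 * Real.exp (-u / 2))
    (fun u _ => ((((hasDerivAt_id u).neg.div_const 2).exp.const_mul
      (104 * Real.exp 9)).neg).congr_deriv (by simp only [Pi.neg_apply, id]; ring))
    (fun u hu => h.abs_le_right hu.1)
  have hexp : Real.exp 9 * Real.exp (-(-1) / 2) ≤ Real.exp 9 * 2 := by
    rw [neg_neg]
    gcongr
    exact exp_one_half_le_two
  have : 0 ≤ 104 * Real.exp 9 * Real.exp (-x / 2) := by positivity
  rw [Real.norm_eq_abs] at hvariation
  linarith [abs_sub_abs_le_abs_sub (Φ x) (Φ (-1))]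

end Right

end IsEdgeSolution

/-- Bounds with constant `C` on `ψ`, its derivative `ψ'`, the second derivative `Vψ` and the
primitive `Φ`, valid from the centre `-2N²` of the spectrum on. They have the size of the
corresponding quantities for the Airy function, up to the rate of decay at `+∞`. -/
structure IsEdgeBounded (C N : ℝ) (ψ ψ' Φ : ℝ → ℝ) : Prop where
  abs_le : ∀ x, -(2 * N ^ 2) ≤ x → |ψ x| ≤ C / edgeWeight x
  abs_deriv_le : ∀ x, -(2 * N ^ 2) ≤ x → |ψ' x| ≤ C * edgeWeight x
  abs_potential_mul_le : ∀ x, -(2 * N ^ 2) ≤ x → |edgePotential N x * ψ x| ≤ C * edgeWeight x ^ 3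
  abs_primitive_le : ∀ x, -(2 * N ^ 2) ≤ x → |Φ x| ≤ C
  abs_primitive_le_of_nonpos : ∀ x, -(2 * N ^ 2) ≤ x → x ≤ 0 → |Φ x| ≤ C / edgeWeight x ^ 3
  abs_le_of_nonneg : ∀ x, 0 ≤ x → |ψ x| ≤ C / (1 + x) ^ 3
  abs_deriv_le_of_nonneg : ∀ x, 0 ≤ x → |ψ' x| ≤ C / (1 + x) ^ 3

namespace IsEdgeSolution

variable {N : ℝ} {ψ ψ' Φ : ℝ → ℝ} {x : ℝ}

lemma abs_le_div_pow_three (h : IsEdgeSolution N ψ ψ' Φ) (hx : -1 ≤ x) :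
    |ψ x| ≤ 2496 * Real.exp 9 / (1 + |x|) ^ 3 := by
  rw [le_div_iff₀ (by positivity)]
  calc |ψ x| * (1 + |x|) ^ 3
      ≤ 52 * Real.exp 9 * Real.exp (-x / 2) * (1 + |x|) ^ 3 := by gcongr; exact h.abs_le_right hx
    _ = 52 * Real.exp 9 * ((1 + |x|) ^ 3 * Real.exp (-x / 2)) := by ring
    _ ≤ 52 * Real.exp 9 * 48 := by gcongr; exact one_add_abs_pow_three_mul_exp_le hx
    _ = 2496 * Real.exp 9 := by ring

lemma abs_deriv_le_div_pow_three (h : IsEdgeSolution N ψ ψ' Φ) (hx : -1 ≤ x) :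
    |ψ' x| ≤ 2496 * Real.exp 9 / (1 + |x|) ^ 3 := by
  rw [le_div_iff₀ (by positivity)]
  calc |ψ' x| * (1 + |x|) ^ 3
      ≤ 52 * Real.exp 9 * Real.exp (-x / 2) * (1 + |x|) ^ 3 := by
        gcongr; exact h.abs_deriv_le_right hx
    _ = 52 * Real.exp 9 * ((1 + |x|) ^ 3 * Real.exp (-x / 2)) := by ring
    _ ≤ 52 * Real.exp 9 * 48 := by gcongr; exact one_add_abs_pow_three_mul_exp_le hx
    _ = 2496 * Real.exp 9 := by ring

lemma abs_potential_mul_le_left (h : IsEdgeSolution N ψ ψ' Φ) (hx : -(2 * N ^ 2) ≤ x)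
    (hx₁ : x ≤ -1) : |edgePotential N x * ψ x| ≤ 30 * edgeWeight x ^ 3 := by
  have hw := edgeWeight_pos x
  have hV : |edgePotential N x| ≤ 2 * edgeWeight x ^ 4 := by
    rw [edgeWeight_pow_four, abs_of_neg (by
      linarith [edgePotential_le_half h.one_le hx (by linarith)])]
    linarith [two_mul_le_edgePotential h.one_le hx₁, neg_le_abs x]
  rw [abs_mul]
  calc |edgePotential N x| * |ψ x| ≤ 2 * edgeWeight x ^ 4 * (15 / edgeWeight x) := by
        gcongr
        exact h.abs_le_left hx hx₁
    _ = 30 * edgeWeight x ^ 3 := by field_simp; ring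

lemma abs_le_div_edgeWeight_right (h : IsEdgeSolution N ψ ψ' Φ) (hx : -1 ≤ x) :
    |ψ x| ≤ 2496 * Real.exp 9 / edgeWeight x := by
  refine (h.abs_le_div_pow_three hx).trans ?_
  have hone : 1 ≤ 1 + |x| := by linarith [abs_nonneg x]
  have hw := edgeWeight_pos x
  gcongr
  exact (edgeWeight_le_one_add_abs x).trans (le_self_pow₀ hone three_ne_zero)

lemma abs_deriv_le_right_const (h : IsEdgeSolution N ψ ψ' Φ) (hx : -1 ≤ x) :
    |ψ' x| ≤ 2496 * Real.exp 9 :=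
  (h.abs_deriv_le_div_pow_three hx).trans
    (div_le_self (by positivity) (one_le_pow₀ (by linarith [abs_nonneg x])))

lemma abs_potential_mul_le_right (h : IsEdgeSolution N ψ ψ' Φ) (hx : -1 ≤ x) :
    |edgePotential N x * ψ x| ≤ 2496 * Real.exp 9 :=
  calc |edgePotential N x * ψ x|
      ≤ (1 + |x|) ^ 2 * (2496 * Real.exp 9 / (1 + |x|) ^ 3) := by
        rw [abs_mul]
        exact mul_le_mul (abs_edgePotential_le h.one_le) (h.abs_le_div_pow_three hx)
          (abs_nonneg _) (by positivity)
    _ = 2496 * Real.exp 9 / (1 + |x|) := by field_simp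
    _ ≤ 2496 * Real.exp 9 := div_le_self (by positivity) (by linarith [abs_nonneg x])

lemma abs_primitive_le_div_edgeWeight (h : IsEdgeSolution N ψ ψ' Φ) (hx : -1 ≤ x) (hx₀ : x ≤ 0) :
    |Φ x| ≤ (1800 + 416 * Real.exp 9) / edgeWeight x ^ 3 := by
  have hw := one_le_edgeWeight x
  have hpow : edgeWeight x ^ 3 ≤ 2 :=
    calc edgeWeight x ^ 3 ≤ edgeWeight x ^ 4 := pow_le_pow_right₀ hw (by norm_num)
      _ ≤ 2 := by rw [edgeWeight_pow_four, abs_of_nonpos hx₀]; linarith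
  rw [le_div_iff₀ (pow_pos (edgeWeight_pos x) 3)]
  calc |Φ x| * edgeWeight x ^ 3 ≤ (900 + 208 * Real.exp 9) * 2 :=
        mul_le_mul (h.abs_primitive_le_right hx) hpow (by positivity) (by positivity)
    _ = 1800 + 416 * Real.exp 9 := by ring

theorem isEdgeBounded (h : IsEdgeSolution N ψ ψ' Φ) :
    IsEdgeBounded (1800 + 2496 * Real.exp 9) N ψ ψ' Φ := by
  have hM := Real.exp_pos 9
  have hw₀ := edgeWeight_pos
  have hw₁ := fun x (k : ℕ) => one_le_pow₀ (one_le_edgeWeight x) (n := k)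
  refine ⟨fun x hx => ?_, fun x hx => ?_, fun x hx => ?_, fun x hx => ?_, fun x hx hx₀ => ?_,
    fun x hx => ?_, fun x hx => ?_⟩
  · obtain hx₁ | hx₁ := le_total x (-1)
    · exact (h.abs_le_left hx hx₁).trans (div_le_div_of_nonneg_right (by linarith) (hw₀ x).le)
    · exact (h.abs_le_div_edgeWeight_right hx₁).trans
        (div_le_div_of_nonneg_right (by linarith) (hw₀ x).le)
  · obtain hx₁ | hx₁ := le_total x (-1)
    · exact (h.abs_deriv_le_left hx hx₁).trans (by nlinarith [hw₀ x])
    · exact (h.abs_deriv_le_right_const hx₁).trans (by nlinarith [one_le_edgeWeight x])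
  · obtain hx₁ | hx₁ := le_total x (-1)
    · exact (h.abs_potential_mul_le_left hx hx₁).trans (by nlinarith [hw₁ x 3])
    · exact (h.abs_potential_mul_le_right hx₁).trans (by nlinarith [hw₁ x 3])
  · obtain hx₁ | hx₁ := le_total x (-1)
    · linarith [(h.abs_primitive_le_left hx hx₁).trans (div_le_self (by norm_num) (hw₁ x 3))]
    · linarith [h.abs_primitive_le_right hx₁]
  · obtain hx₁ | hx₁ := le_total x (-1)
    · exact (h.abs_primitive_le_left hx hx₁).trans
        (div_le_div_of_nonneg_right (by linarith) (pow_pos (hw₀ x) 3).le)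
    · exact (h.abs_primitive_le_div_edgeWeight hx₁ hx₀).trans
        (div_le_div_of_nonneg_right (by linarith) (pow_pos (hw₀ x) 3).le)
  · have hdecay := h.abs_le_div_pow_three (by linarith : -1 ≤ x)
    rw [abs_of_nonneg hx] at hdecay
    exact hdecay.trans (div_le_div_of_nonneg_right (by linarith) (by positivity))
  · have hdecay := h.abs_deriv_le_div_pow_three (by linarith : -1 ≤ x)
    rw [abs_of_nonneg hx] at hdecay
    exact hdecay.trans (div_le_div_of_nonneg_right (by linarith) (by positivity))

end IsEdgeSolution

/-! ### Integrals of divided differences -/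

section DividedDifference

variable {F f f' : ℝ → ℝ} {a b x y δ K : ℝ}

lemma continuous_dslope_of_hasDerivAt (hf : ∀ u, HasDerivAt f (f' u) u) (x : ℝ) :
    Continuous (dslope f x) :=
  continuousOn_univ.1 <| (continuousOn_dslope univ_mem).2
    ⟨fun u _ => (hf u).continuousAt.continuousWithinAt, (hf x).differentiableAt⟩

lemma abs_dslope_le (hab : a ≤ b) (hf : ∀ u, HasDerivAt f (f' u) u)
    (hK : ∀ u ∈ Icc a b, |f' u| ≤ K) : |dslope f a b| ≤ K := by
  obtain rfl | hlt := hab.eq_or_lt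
  · rw [dslope_same, (hf a).deriv]
    exact hK a (left_mem_Icc.2 le_rfl)
  · rw [dslope_of_ne _ hlt.ne', slope_def_field, abs_div, abs_of_pos (sub_pos.2 hlt),
      div_le_iff₀ (sub_pos.2 hlt)]
    have := norm_sub_le_sub_of_norm_deriv_le (g := fun u => K * u) (g' := fun _ => K) hab
      (fun u _ => hf u) (fun u _ => by simpa using (hasDerivAt_id u).const_mul K) hK
    rwa [Real.norm_eq_abs, ← mul_sub] at this

lemma abs_integral_dslope_le_of_abs_deriv_le (hab : a ≤ b) (hf : ∀ u, HasDerivAt f (f' u) u)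
    (hK : ∀ u ∈ Icc a b, |f' u| ≤ K) : |∫ u in a..b, dslope f a u| ≤ K * (b - a) := by
  rw [← abs_of_nonneg (sub_nonneg.2 hab)]
  refine intervalIntegral.norm_integral_le_of_norm_le_const (E := ℝ) fun u hu => ?_
  rw [uIoc_of_le hab] at hu
  exact abs_dslope_le hu.1.le hf fun v hv => hK v ⟨hv.1, hv.2.trans hu.2⟩

lemma hasDerivAt_neg_two_mul_inv_sqrt_sub (hx : x < b) :
    HasDerivAt (fun u => -2 * K * (√(u - x))⁻¹) (K * √(b - x) / (b - x) ^ 2) b := by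
  have hpos : 0 < b - x := sub_pos.2 hx
  have hsqrt : 0 < √(b - x) := Real.sqrt_pos.2 hpos
  refine ((((hasDerivAt_id b).sub_const x).sqrt hpos.ne').inv hsqrt.ne').const_mul (-2 * K)
    |>.congr_deriv ?_
  have hsq : b - x = √(b - x) ^ 2 := (Real.sq_sqrt hpos.le).symm
  simp only [id]
  rw [← hsq]
  field_simp
  rw [← hsq]

/-- Integration by parts turns `∫ f/(u - x)` into boundary terms and `∫ F/(u - x)²`, which converges
at infinity as soon as `F` grows at most like `√(u - x)`. -/
lemma abs_integral_dslope_le_of_abs_primitive_le (hxa : x < a) (hab : a ≤ b)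
    (hF : ∀ u, HasDerivAt F (f u) u) (hf : ∀ u, HasDerivAt f (f' u) u) (hfx : f x = 0)
    (hK : ∀ u ∈ Icc a b, |F u| ≤ K * √(u - x)) :
    |∫ u in a..b, dslope f x u| ≤ 4 * K / √(a - x) := by
  have hpos : ∀ u ∈ Icc a b, 0 < u - x := fun u hu => sub_pos.2 (hxa.trans_le hu.1)
  have hderiv : ∀ u ∈ Icc a b, HasDerivAt
      (fun u => (∫ v in a..u, dslope f x v) - F u / (u - x)) (F u / (u - x) ^ 2) u := by
    intro u hu
    have hne := (hpos u hu).ne'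
    refine ((continuous_dslope_of_hasDerivAt hf x).integral_hasStrictDerivAt a u |>.hasDerivAt.sub
      ((hF u).div ((hasDerivAt_id u).sub_const x) hne)).congr_deriv ?_
    rw [dslope_of_ne _ (sub_ne_zero.1 hne), slope_def_field, hfx]
    simp only [id]
    field_simp
    ring
  have hmain := norm_sub_le_sub_of_norm_deriv_le (g := fun u => -2 * K * (√(u - x))⁻¹) hab hderiv
    (fun u hu => hasDerivAt_neg_two_mul_inv_sqrt_sub (hxa.trans_le hu.1)) (fun u hu => by
      rw [Real.norm_eq_abs, abs_div, abs_of_nonneg (sq_nonneg (u - x))]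
      gcongr
      exact hK u hu)
  have hbdry : ∀ u ∈ Icc a b, |F u / (u - x)| ≤ K * (√(u - x))⁻¹ := by
    intro u hu
    have hsq := Real.mul_self_sqrt (hpos u hu).le
    have hsqrt : 0 < √(u - x) := Real.sqrt_pos.2 (hpos u hu)
    rw [abs_div, abs_of_pos (hpos u hu), div_le_iff₀ (hpos u hu)]
    calc |F u| ≤ K * √(u - x) := hK u hu
      _ = K * (√(u - x))⁻¹ * (√(u - x) * √(u - x)) := by field_simp
      _ = K * (√(u - x))⁻¹ * (u - x) := by rw [hsq]
  have ha := hbdry a (left_mem_Icc.2 hab)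
  have hb := hbdry b (right_mem_Icc.2 hab)
  simp only [intervalIntegral.integral_same, zero_sub, sub_neg_eq_add, Real.norm_eq_abs] at hmain
  rw [abs_le] at *
  rw [mul_div_assoc, div_eq_mul_inv]
  constructor <;> linarith

lemma abs_integral_dslope_le_of_le (hδ : 0 < δ) (hxy : x ≤ y) (hF : ∀ u, HasDerivAt F (f u) u)
    (hf : ∀ u, HasDerivAt f (f' u) u) (hfx : f x = 0)
    (hnear : ∀ u ∈ Icc x y, |u - x| ≤ δ → |f' u| ≤ K / δ)
    (hfar : ∀ u ∈ Icc x y, δ ≤ |u - x| → |F u| ≤ K * √(δ * |u - x|)) :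
    |∫ u in x..y, dslope f x u| ≤ 5 * K := by
  have hleft : ∀ z ∈ Icc x y, z ≤ x + δ → |∫ u in x..z, dslope f x u| ≤ K := by
    intro z hz hzδ
    have hK : 0 ≤ K / δ := (abs_nonneg _).trans
      (hnear x (left_mem_Icc.2 hxy) (by simpa using hδ.le))
    calc _ ≤ K / δ * (z - x) := abs_integral_dslope_le_of_abs_deriv_le hz.1 hf fun u hu =>
          hnear u ⟨hu.1, hu.2.trans hz.2⟩ (by
            rw [abs_of_nonneg (sub_nonneg.2 hu.1)]; linarith [hu.2])
      _ ≤ K / δ * δ := by gcongr; linarith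
      _ = K := div_mul_cancel₀ K hδ.ne'
  have hK : 0 ≤ K := (abs_nonneg _).trans (hleft x (left_mem_Icc.2 hxy) (by linarith))
  obtain hy | hy := le_total y (x + δ)
  · linarith [hleft y (right_mem_Icc.2 hxy) hy]
  · have hright : |∫ u in (x + δ)..y, dslope f x u| ≤ 4 * K := by
      have h := abs_integral_dslope_le_of_abs_primitive_le (K := K * √δ) (lt_add_of_pos_right x hδ)
        hy hF hf hfx fun u hu => by
          have hu' : 0 ≤ u - x := by linarith [hu.1]
          have := hfar u ⟨by linarith [hu.1], hu.2⟩ (by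
            rw [abs_of_nonneg hu']; linarith [hu.1])
          rwa [abs_of_nonneg hu', Real.sqrt_mul hδ.le, ← mul_assoc] at this
      rwa [add_sub_cancel_left, ← mul_assoc, mul_div_assoc, div_self (Real.sqrt_pos.2 hδ).ne',
        mul_one] at h
    have hint := (continuous_dslope_of_hasDerivAt hf x).intervalIntegrable (μ := volume)
    rw [← intervalIntegral.integral_add_adjacent_intervals (hint x (x + δ)) (hint (x + δ) y)]
    have := hleft (x + δ) ⟨by linarith, hy⟩ le_rfl
    linarith [abs_add_le (∫ u in x..(x + δ), dslope f x u) (∫ u in (x + δ)..y, dslope f x u)]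

lemma dslope_comp_neg (f : ℝ → ℝ) (x u : ℝ) :
    dslope (fun v => f (-v)) (-x) u = -dslope f x (-u) := by
  obtain rfl | hu := eq_or_ne u (-x)
  · simp [deriv_comp_neg]
  · rw [dslope_of_ne _ hu, dslope_of_ne _ fun h => hu (neg_eq_iff_eq_neg.1 h), slope_def_field,
      slope_def_field, neg_neg, ← div_neg]
    congr 1
    ring

theorem abs_integral_dslope_le (hδ : 0 < δ) (hF : ∀ u, HasDerivAt F (f u) u)
    (hf : ∀ u, HasDerivAt f (f' u) u) (hfx : f x = 0)
    (hnear : ∀ u ∈ uIcc x y, |u - x| ≤ δ → |f' u| ≤ K / δ)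
    (hfar : ∀ u ∈ uIcc x y, δ ≤ |u - x| → |F u| ≤ K * √(δ * |u - x|)) :
    |∫ u in x..y, dslope f x u| ≤ 5 * K := by
  obtain hxy | hyx := le_total x y
  · rw [uIcc_of_le hxy] at hnear hfar
    exact abs_integral_dslope_le_of_le hδ hxy hF hf hfx hnear hfar
  · rw [uIcc_of_ge hyx] at hnear hfar
    have habs (u : ℝ) : |(-u) - x| = |u - -x| := by rw [← abs_neg]; congr 1; ring
    have hreflect : |∫ u in (-x)..(-y), dslope (fun v => f (-v)) (-x) u| ≤ 5 * K := by
      refine abs_integral_dslope_le_of_le (F := fun v => -F (-v)) (f' := fun v => -f' (-v)) hδ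
        (neg_le_neg hyx) (fun u => ?_) (fun u => ?_) (by simpa using hfx)
        (fun u hu hu' => ?_) (fun u hu hu' => ?_)
      · exact ((hF (-u)).comp u (hasDerivAt_neg u)).neg.congr_deriv (by simp)
      · exact ((hf (-u)).comp u (hasDerivAt_neg u)).congr_deriv (by simp)
      · rw [abs_neg]
        exact hnear (-u) ⟨le_neg.2 hu.2, neg_le.2 hu.1⟩ (by rwa [habs])
      · rw [abs_neg, ← habs]
        exact hfar (-u) ⟨le_neg.2 hu.2, neg_le.2 hu.1⟩ (by rwa [habs])
    simp only [dslope_comp_neg, intervalIntegral.integral_neg, abs_neg] at hreflect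
    rwa [intervalIntegral.integral_comp_neg (fun u => dslope f x u), neg_neg, neg_neg,
      intervalIntegral.integral_symm, abs_neg] at hreflect

end DividedDifference

/-! ### Integrated kernel bounds -/

section EdgeWeight

variable {x u : ℝ}

lemma edgeWeight_le_two_mul (hux : |u - x| ≤ 1) : edgeWeight u ≤ 2 * edgeWeight x := by
  refine le_of_pow_le_pow_left₀ four_ne_zero (by linarith [one_le_edgeWeight x]) ?_
  rw [mul_pow, edgeWeight_pow_four, edgeWeight_pow_four]
  linarith [abs_sub_abs_le_abs_sub u x, abs_nonneg x]

lemma edgeWeight_le_two_mul_or_sq_le_two_mul_sqrt (x u : ℝ) :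
    edgeWeight x ≤ 2 * edgeWeight u ∨ edgeWeight x ^ 2 ≤ 2 * √|u - x| := by
  obtain hfar | hnear := le_or_gt (edgeWeight x ^ 4) (4 * |u - x|)
  · refine Or.inr (abs_le_of_sq_le_sq' ?_ (by positivity)).2
    rw [mul_pow, Real.sq_sqrt (abs_nonneg _)]
    linarith
  · refine Or.inl (le_of_pow_le_pow_left₀ four_ne_zero (by linarith [one_le_edgeWeight u]) ?_)
    rw [mul_pow]
    linarith [edgeWeight_pow_four x, edgeWeight_pow_four u, abs_nonneg u,
      abs_sub_abs_le_abs_sub x u, abs_sub_comm x u]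

lemma one_le_edgeWeight_mul_sqrt (hux : 1 / edgeWeight x ^ 2 ≤ |u - x|) :
    1 ≤ edgeWeight x * √|u - x| := by
  have hw := edgeWeight_pos x
  rw [← div_le_iff₀' hw]
  exact Real.le_sqrt_of_sq_le (by rwa [div_pow, one_pow])

lemma one_le_two_mul_edgeWeight_mul_sqrt (hux : 1 ≤ edgeWeight x * √|u - x|) :
    1 ≤ 2 * edgeWeight u * √|u - x| := by
  obtain h | h := edgeWeight_le_two_mul_or_sq_le_two_mul_sqrt x u
  · exact hux.trans (by gcongr)
  · nlinarith [one_le_edgeWeight x, one_le_edgeWeight u, Real.sqrt_nonneg |u - x|]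

lemma edgeWeight_sq_le_two_mul_sqrt_of_nonpos_of_nonneg (hx : x ≤ 0) (hu : 0 ≤ u)
    (hux : 1 ≤ edgeWeight x * √|u - x|) : edgeWeight x ^ 2 ≤ 2 * √|u - x| := by
  have hw := one_le_pow₀ (one_le_edgeWeight x) (n := 2)
  have hdist := Real.sq_sqrt (abs_nonneg (u - x))
  have hpow : (edgeWeight x ^ 2) ^ 2 ≤ 1 + √|u - x| ^ 2 := by
    rw [← pow_mul, edgeWeight_pow_four, hdist, abs_of_nonpos hx, abs_of_nonneg (by linarith)]
    linarith
  have hux' : 1 ≤ edgeWeight x ^ 2 * √|u - x| ^ 2 := by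
    rw [← mul_pow]; exact one_le_pow₀ hux
  have hhalf : 1 / 2 ≤ √|u - x| ^ 2 := by
    by_contra! hlt
    have : edgeWeight x ^ 2 < 2 := by nlinarith
    nlinarith
  exact (abs_le_of_sq_le_sq' (by linarith) (by positivity)).2

end EdgeWeight

namespace IsEdgeBounded

variable {C N : ℝ} {ψ ψ' Φ : ℝ → ℝ} {x y u : ℝ}

lemma const_nonneg (h : IsEdgeBounded C N ψ ψ' Φ) : 0 ≤ C := by
  simpa using (abs_nonneg _).trans (h.abs_le_of_nonneg 0 le_rfl)

lemma abs_le_const (h : IsEdgeBounded C N ψ ψ' Φ) (hx : -(2 * N ^ 2) ≤ x) : |ψ x| ≤ C :=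
  (h.abs_le x hx).trans (div_le_self h.const_nonneg (one_le_edgeWeight x))

lemma abs_deriv_le_div_sq_of_nonneg (h : IsEdgeBounded C N ψ ψ' Φ) (hx : 0 ≤ x) :
    |ψ' x| ≤ C / edgeWeight x ^ 2 := by
  refine (h.abs_deriv_le_of_nonneg x hx).trans ?_
  have hC := h.const_nonneg
  have hw := edgeWeight_pos x
  gcongr
  rw [show 1 + x = edgeWeight x ^ 4 by rw [edgeWeight_pow_four, abs_of_nonneg hx], ← pow_mul]
  exact pow_le_pow_right₀ (one_le_edgeWeight x) (by norm_num)

lemma abs_wronskian_deriv_le (h : IsEdgeBounded C N ψ ψ' Φ) (hx : -(2 * N ^ 2) ≤ x)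
    (hu : -(2 * N ^ 2) ≤ u) (hux : |u - x| ≤ 1) :
    |ψ' u * ψ' x - edgePotential N u * ψ u * ψ x| ≤ 10 * C ^ 2 * edgeWeight x ^ 2 := by
  have hC := h.const_nonneg
  have hw := edgeWeight_pos x
  have hwu := edgeWeight_pos u
  have hle := edgeWeight_le_two_mul hux
  calc _ ≤ |ψ' u| * |ψ' x| + |edgePotential N u * ψ u| * |ψ x| := by
        rw [← abs_mul, ← abs_mul]; exact abs_sub _ _
    _ ≤ (C * (2 * edgeWeight x)) * (C * edgeWeight x)
        + (C * (2 * edgeWeight x) ^ 3) * (C / edgeWeight x) := by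
        gcongr
        · exact (h.abs_deriv_le u hu).trans (by gcongr)
        · exact h.abs_deriv_le x hx
        · exact (h.abs_potential_mul_le u hu).trans (by gcongr)
        · exact h.abs_le x hx
    _ = 10 * C ^ 2 * edgeWeight x ^ 2 := by field_simp; ring

lemma abs_mul_le_mul_sqrt (h : IsEdgeBounded C N ψ ψ' Φ) (hx : -(2 * N ^ 2) ≤ x)
    (hu : -(2 * N ^ 2) ≤ u) (hux : 1 ≤ edgeWeight x * √|u - x|) :
    |ψ u * ψ x| ≤ 2 * C ^ 2 * √|u - x| / edgeWeight x := by
  have hC := h.const_nonneg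
  have hw := edgeWeight_pos x
  have hwu := edgeWeight_pos u
  calc |ψ u * ψ x| ≤ C / edgeWeight u * (C / edgeWeight x) := by
        rw [abs_mul]
        gcongr
        exacts [h.abs_le u hu, h.abs_le x hx]
    _ = C ^ 2 / edgeWeight x / edgeWeight u * 1 := by field_simp
    _ ≤ C ^ 2 / edgeWeight x / edgeWeight u * (2 * edgeWeight u * √|u - x|) := by
        gcongr
        exact one_le_two_mul_edgeWeight_mul_sqrt hux
    _ = 2 * C ^ 2 * √|u - x| / edgeWeight x := by field_simp

lemma abs_primitive_mul_deriv_le_of_sq_le (h : IsEdgeBounded C N ψ ψ' Φ)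
    (hx : -(2 * N ^ 2) ≤ x) (hu : -(2 * N ^ 2) ≤ u) (hux : edgeWeight x ^ 2 ≤ 2 * √|u - x|) :
    |Φ u * ψ' x| ≤ 8 * C ^ 2 * √|u - x| / edgeWeight x := by
  have hC := h.const_nonneg
  have hw := edgeWeight_pos x
  calc |Φ u * ψ' x| ≤ C * (C * edgeWeight x) := by
        rw [abs_mul]
        gcongr
        exacts [h.abs_primitive_le u hu, h.abs_deriv_le x hx]
    _ = C ^ 2 * edgeWeight x ^ 2 / edgeWeight x := by field_simp
    _ ≤ C ^ 2 * (8 * √|u - x|) / edgeWeight x := by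
        gcongr
        linarith [Real.sqrt_nonneg |u - x|]
    _ = 8 * C ^ 2 * √|u - x| / edgeWeight x := by ring

lemma abs_primitive_mul_deriv_le (h : IsEdgeBounded C N ψ ψ' Φ) (hx : -(2 * N ^ 2) ≤ x)
    (hu : -(2 * N ^ 2) ≤ u) (hux : 1 ≤ edgeWeight x * √|u - x|) :
    |Φ u * ψ' x| ≤ 8 * C ^ 2 * √|u - x| / edgeWeight x := by
  have hC := h.const_nonneg
  have hw := edgeWeight_pos x
  have hfar : 8 * C ^ 2 / edgeWeight x ^ 2 ≤ 8 * C ^ 2 * √|u - x| / edgeWeight x :=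
    calc 8 * C ^ 2 / edgeWeight x ^ 2 = 8 * C ^ 2 / edgeWeight x ^ 2 * 1 := (mul_one _).symm
      _ ≤ 8 * C ^ 2 / edgeWeight x ^ 2 * (edgeWeight x * √|u - x|) := by gcongr
      _ = 8 * C ^ 2 * √|u - x| / edgeWeight x := by field_simp
  obtain hx₀ | hx₀ := le_total 0 x
  · refine le_trans ?_ hfar
    calc |Φ u * ψ' x| ≤ C * (C / edgeWeight x ^ 2) := by
          rw [abs_mul]
          gcongr
          exacts [h.abs_primitive_le u hu, h.abs_deriv_le_div_sq_of_nonneg hx₀]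
      _ = C ^ 2 / edgeWeight x ^ 2 := by ring
      _ ≤ 8 * C ^ 2 / edgeWeight x ^ 2 := by gcongr; linarith [sq_nonneg C]
  obtain hu₀ | hu₀ := le_total 0 u
  · exact h.abs_primitive_mul_deriv_le_of_sq_le hx hu
      (edgeWeight_sq_le_two_mul_sqrt_of_nonpos_of_nonneg hx₀ hu₀ hux)
  obtain hle | hle := edgeWeight_le_two_mul_or_sq_le_two_mul_sqrt x u
  · refine le_trans ?_ hfar
    calc |Φ u * ψ' x| ≤ C / (edgeWeight x / 2) ^ 3 * (C * edgeWeight x) := by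
          rw [abs_mul]
          gcongr
          · refine (h.abs_primitive_le_of_nonpos u hu hu₀).trans ?_
            gcongr
            linarith
          · exact h.abs_deriv_le x hx
      _ = 8 * C ^ 2 / edgeWeight x ^ 2 := by field_simp; norm_num
  · exact h.abs_primitive_mul_deriv_le_of_sq_le hx hu hle

/-- The two regimes meet at distance `(1 + |x|)^{-1/2}` from `x`, the local wavelength of `ψ`. -/
theorem abs_integral_dslope_wronskian_le (hψ : IsEdgeSolution N ψ ψ' Φ)
    (h : IsEdgeBounded C N ψ ψ' Φ) (hx : -(2 * N ^ 2) ≤ x) (hy : -(2 * N ^ 2) ≤ y) :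
    |∫ u in x..y, dslope (fun u => ψ u * ψ' x - ψ' u * ψ x) x u| ≤ 50 * C ^ 2 := by
  have hw := edgeWeight_pos x
  have hmem : ∀ u ∈ uIcc x y, -(2 * N ^ 2) ≤ u := fun u hu => (le_min hx hy).trans hu.1
  calc _ ≤ 5 * (10 * C ^ 2) := by
        refine abs_integral_dslope_le (δ := 1 / edgeWeight x ^ 2)
          (F := fun u => Φ u * ψ' x - ψ u * ψ x)
          (f' := fun u => ψ' u * ψ' x - edgePotential N u * ψ u * ψ x) (by positivity)
          (fun u => ((hψ.hasDerivAt_primitive u).mul_const _).sub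
            ((hψ.hasDerivAt u trivial).mul_const _))
          (fun u => ((hψ.hasDerivAt u trivial).mul_const _).sub
            ((hψ.hasDerivAt_deriv u trivial).mul_const _)) (by ring)
          (fun u hu hux => ?_) (fun u hu hux => ?_)
        · rw [div_div_eq_mul_div, div_one]
          exact h.abs_wronskian_deriv_le hx (hmem u hu) (hux.trans
            ((div_le_one (by positivity)).2 (one_le_pow₀ (one_le_edgeWeight x))))
        · have hux' := one_le_edgeWeight_mul_sqrt hux
          rw [one_div_mul_eq_div, Real.sqrt_div' _ (by positivity), Real.sqrt_sq hw.le]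
          calc _ ≤ |Φ u * ψ' x| + |ψ u * ψ x| := abs_sub _ _
            _ ≤ 8 * C ^ 2 * √|u - x| / edgeWeight x + 2 * C ^ 2 * √|u - x| / edgeWeight x :=
                add_le_add (h.abs_primitive_mul_deriv_le hx (hmem u hu) hux')
                  (h.abs_mul_le_mul_sqrt hx (hmem u hu) hux')
            _ = 10 * C ^ 2 * (√|u - x| / edgeWeight x) := by ring
    _ = 50 * C ^ 2 := by ring

end IsEdgeBounded

lemma abs_mul_le_of_abs_le {a b A B : ℝ} (ha : |a| ≤ A) (hb : |b| ≤ B) : |a * b| ≤ A * B := by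
  rw [abs_mul]
  exact mul_le_mul ha hb (abs_nonneg b) ((abs_nonneg a).trans ha)

/-- The edge-scaled image of `ψ` under the annihilation operator: for `ψ = ψ_n` and `N = n^{1/3}` it
is `ψ_{n-1}ⁿ`. -/
noncomputable def edgeLowered (N : ℝ) (ψ ψ' : ℝ → ℝ) (x : ℝ) : ℝ :=
  ψ' x / N + (1 + x / (2 * N ^ 2)) * ψ x

/-- The kernel `J₁ⁿ` as a function of the edge solution, with `N = n^{1/3}`. The divided difference
`dslope` covers the diagonal. -/
noncomputable def edgeKernel (N : ℝ) (ψ ψ' Φ : ℝ → ℝ) (x y : ℝ) : ℝ :=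
  dslope (fun u => ψ u * ψ' y - ψ' u * ψ y) y x - 1 / (2 * N) * (ψ x * ψ y) +
    1 / 2 * edgeLowered N ψ ψ' x * Φ y

namespace IsEdgeSolution

variable {N : ℝ} {ψ ψ' Φ : ℝ → ℝ}

lemma continuous (h : IsEdgeSolution N ψ ψ' Φ) : Continuous ψ :=
  continuous_iff_continuousAt.2 fun x => (h.hasDerivAt x trivial).continuousAt

lemma continuous_deriv (h : IsEdgeSolution N ψ ψ' Φ) : Continuous ψ' :=
  continuous_iff_continuousAt.2 fun x => (h.hasDerivAt_deriv x trivial).continuousAt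

lemma continuous_primitive (h : IsEdgeSolution N ψ ψ' Φ) : Continuous Φ :=
  continuous_iff_continuousAt.2 fun x => (h.hasDerivAt_primitive x).continuousAt

lemma continuous_edgeLowered (h : IsEdgeSolution N ψ ψ' Φ) : Continuous (edgeLowered N ψ ψ') :=
  (h.continuous_deriv.div_const N).add
    ((continuous_const.add (continuous_id.div_const _)).mul h.continuous)

lemma hasDerivAt_primitive_edgeLowered (h : IsEdgeSolution N ψ ψ' Φ) (x : ℝ) :
    HasDerivAt (fun u => ψ u / N + (1 + u / (2 * N ^ 2)) * Φ u)
      (edgeLowered N ψ ψ' x + Φ x / (2 * N ^ 2)) x :=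
  (((h.hasDerivAt x trivial).div_const N).add ((hasDerivAt_deriv_edgePotential N x).mul
    (h.hasDerivAt_primitive x))).congr_deriv (by unfold edgeLowered; ring)

lemma integral_edgeKernel (h : IsEdgeSolution N ψ ψ' Φ) (x y : ℝ) :
    ∫ u in x..y, edgeKernel N ψ ψ' Φ u x =
      (∫ u in x..y, dslope (fun u => ψ u * ψ' x - ψ' u * ψ x) x u)
        - 1 / (2 * N) * ψ x * (∫ u in x..y, ψ u)
        + 1 / 2 * Φ x * ∫ u in x..y, edgeLowered N ψ ψ' u := by
  have hdslope : Continuous (dslope (fun u => ψ u * ψ' x - ψ' u * ψ x) x) :=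
    continuous_dslope_of_hasDerivAt (fun u => ((h.hasDerivAt u trivial).mul_const (ψ' x)).sub
      ((h.hasDerivAt_deriv u trivial).mul_const (ψ x))) x
  have hψx : Continuous fun u => 1 / (2 * N) * ψ x * ψ u := h.continuous.const_mul _
  have hΦx : Continuous fun u => 1 / 2 * Φ x * edgeLowered N ψ ψ' u :=
    h.continuous_edgeLowered.const_mul _
  have hdiff : Continuous fun u =>
      dslope (fun u => ψ u * ψ' x - ψ' u * ψ x) x u - 1 / (2 * N) * ψ x * ψ u := hdslope.sub hψx
  rw [← intervalIntegral.integral_const_mul, ← intervalIntegral.integral_const_mul,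
    ← intervalIntegral.integral_sub (hdslope.intervalIntegrable _ _) (hψx.intervalIntegrable _ _),
    ← intervalIntegral.integral_add (hdiff.intervalIntegrable _ _) (hΦx.intervalIntegrable _ _)]
  congr 1 with u
  unfold edgeKernel
  ring

end IsEdgeSolution

namespace IsEdgeBounded

variable {C N : ℝ} {ψ ψ' Φ : ℝ → ℝ} {x y : ℝ}

lemma abs_deriv_div_le (h : IsEdgeBounded C N ψ ψ' Φ) (hN : 1 ≤ N) (hx : -(2 * N ^ 2) ≤ x) :
    |ψ' x / N| ≤ 2 * C / edgeWeight x := by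
  have hC := h.const_nonneg
  have hw := edgeWeight_pos x
  have hw₁ := one_le_edgeWeight x
  rw [abs_div, abs_of_pos (one_pos.trans_le hN), div_le_iff₀ (one_pos.trans_le hN)]
  obtain hx₀ | hx₀ := le_total 0 x
  · calc |ψ' x| ≤ C / edgeWeight x ^ 2 := h.abs_deriv_le_div_sq_of_nonneg hx₀
      _ ≤ C / edgeWeight x := by gcongr; exact le_self_pow₀ hw₁ two_ne_zero
      _ = C / edgeWeight x * 1 := (mul_one _).symm
      _ ≤ 2 * C / edgeWeight x * N := by gcongr; linarith
  · have hle : edgeWeight x ^ 2 ≤ 2 * N := by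
      refine (abs_le_of_sq_le_sq' ?_ (by positivity)).2
      rw [← pow_mul, edgeWeight_pow_four, abs_of_nonpos hx₀]
      nlinarith
    calc |ψ' x| ≤ C * edgeWeight x := h.abs_deriv_le x hx
      _ = C * edgeWeight x ^ 2 / edgeWeight x := by field_simp
      _ ≤ C * (2 * N) / edgeWeight x := by gcongr
      _ = 2 * C / edgeWeight x * N := by ring

lemma abs_edgeLowered_le_of_nonneg (h : IsEdgeBounded C N ψ ψ' Φ) (hN : 1 ≤ N) (hx : 0 ≤ x) :
    |edgeLowered N ψ ψ' x| ≤ 2 * C / (1 + x) ^ 2 := by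
  have hC := h.const_nonneg
  have hfirst : |ψ' x / N| ≤ C / (1 + x) ^ 2 := by
    rw [abs_div, abs_of_pos (one_pos.trans_le hN)]
    calc |ψ' x| / N ≤ |ψ' x| := div_le_self (abs_nonneg _) hN
      _ ≤ C / (1 + x) ^ 3 := h.abs_deriv_le_of_nonneg x hx
      _ ≤ C / (1 + x) ^ 2 := by
        gcongr
        exacts [by linarith, by norm_num]
  have hsecond : |(1 + x / (2 * N ^ 2)) * ψ x| ≤ C / (1 + x) ^ 2 := by
    have hcoeff : |1 + x / (2 * N ^ 2)| ≤ 1 + x := by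
      rw [abs_of_nonneg (by positivity)]
      linarith [div_le_self hx (by nlinarith : 1 ≤ 2 * N ^ 2)]
    calc _ ≤ (1 + x) * (C / (1 + x) ^ 3) := by
          rw [abs_mul]
          exact mul_le_mul hcoeff (h.abs_le_of_nonneg x hx) (abs_nonneg _) (by positivity)
      _ = C / (1 + x) ^ 2 := by field_simp
  calc _ ≤ C / (1 + x) ^ 2 + C / (1 + x) ^ 2 := (abs_add_le _ _).trans (add_le_add hfirst hsecond)
    _ = 2 * C / (1 + x) ^ 2 := by ring

lemma abs_edgeLowered_le (h : IsEdgeBounded C N ψ ψ' Φ) (hN : 1 ≤ N) (hx : -(2 * N ^ 2) ≤ x) :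
    |edgeLowered N ψ ψ' x| ≤ 3 * C / edgeWeight x := by
  have hC := h.const_nonneg
  have hw := edgeWeight_pos x
  obtain hx₀ | hx₀ := le_total 0 x
  · refine (h.abs_edgeLowered_le_of_nonneg hN hx₀).trans ?_
    have hle := edgeWeight_le_one_add_abs x
    rw [abs_of_nonneg hx₀] at hle
    gcongr
    exacts [by norm_num, hle.trans (le_self_pow₀ (by linarith) two_ne_zero)]
  · have hsecond : |(1 + x / (2 * N ^ 2)) * ψ x| ≤ C / edgeWeight x := by
      rw [abs_mul]
      exact (mul_le_of_le_one_left (abs_nonneg _) (abs_deriv_edgePotential_le hN hx hx₀)).trans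
        (h.abs_le x hx)
    calc _ ≤ 2 * C / edgeWeight x + C / edgeWeight x :=
          (abs_add_le _ _).trans (add_le_add (h.abs_deriv_div_le hN hx) hsecond)
      _ = 3 * C / edgeWeight x := by ring

lemma abs_integral_edgeLowered_le_of_nonneg (hψ : IsEdgeSolution N ψ ψ' Φ)
    (h : IsEdgeBounded C N ψ ψ' Φ) (hx : 0 ≤ x) :
    |∫ u in (0 : ℝ)..x, edgeLowered N ψ ψ' u| ≤ 2 * C := by
  have hC := h.const_nonneg
  have hle := norm_integral_le_sub_of_norm_le_deriv (g := fun u => -(2 * C) * (1 + u)⁻¹) hx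
    hψ.continuous_edgeLowered
    (fun u hu => (((hasDerivAt_id u).const_add 1).inv
      (by have := hu.1; positivity)).const_mul (-(2 * C)))
    (fun u hu => (h.abs_edgeLowered_le_of_nonneg hψ.one_le hu.1).trans_eq (by simp; ring))
  have : 0 ≤ 2 * C * (1 + x)⁻¹ := by positivity
  simp only [add_zero, inv_one, Real.norm_eq_abs] at hle
  linarith

lemma abs_div_add_mul_primitive_le (h : IsEdgeBounded C N ψ ψ' Φ) (hN : 1 ≤ N)
    (hx : -(2 * N ^ 2) ≤ x) (hx₀ : x ≤ 0) :
    |ψ x / N + (1 + x / (2 * N ^ 2)) * Φ x| ≤ 2 * C := by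
  have hfirst : |ψ x / N| ≤ C := by
    rw [abs_div, abs_of_pos (one_pos.trans_le hN)]
    exact (div_le_self (abs_nonneg _) hN).trans (h.abs_le_const hx)
  have hsecond : |(1 + x / (2 * N ^ 2)) * Φ x| ≤ C := by
    rw [abs_mul]
    exact (mul_le_of_le_one_left (abs_nonneg _) (abs_deriv_edgePotential_le hN hx hx₀)).trans
      (h.abs_primitive_le x hx)
  linarith [abs_add_le (ψ x / N) ((1 + x / (2 * N ^ 2)) * Φ x)]

lemma abs_integral_edgeLowered_le_of_nonpos (hψ : IsEdgeSolution N ψ ψ' Φ)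
    (h : IsEdgeBounded C N ψ ψ' Φ) (hx : -(2 * N ^ 2) ≤ x) (hx₀ : x ≤ 0) :
    |∫ u in (0 : ℝ)..x, edgeLowered N ψ ψ' u| ≤ 5 * C := by
  have hN := hψ.one_le
  have hC := h.const_nonneg
  have hcont : Continuous fun u => Φ u / (2 * N ^ 2) := hψ.continuous_primitive.div_const _
  have hparts := intervalIntegral.integral_eq_sub_of_hasDerivAt (a := 0) (b := x)
    (fun u _ => hψ.hasDerivAt_primitive_edgeLowered u)
    ((hψ.continuous_edgeLowered.add hcont).intervalIntegrable _ _)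
  rw [intervalIntegral.integral_add (hψ.continuous_edgeLowered.intervalIntegrable _ _)
    (hcont.intervalIntegrable _ _)] at hparts
  have hrest : |∫ u in (0 : ℝ)..x, Φ u / (2 * N ^ 2)| ≤ C := by
    calc _ ≤ C / (2 * N ^ 2) * |x - 0| := by
          refine intervalIntegral.norm_integral_le_of_norm_le_const (E := ℝ) fun u hu => ?_
          rw [uIoc_of_ge hx₀] at hu
          rw [Real.norm_eq_abs, abs_div, abs_of_pos (by positivity : 0 < 2 * N ^ 2)]
          gcongr
          exact h.abs_primitive_le u (hx.trans hu.1.le)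
      _ ≤ C / (2 * N ^ 2) * (2 * N ^ 2) := by
          gcongr
          rw [sub_zero, abs_of_nonpos hx₀]
          linarith
      _ = C := div_mul_cancel₀ C (by positivity)
  have hbdry := h.abs_div_add_mul_primitive_le hN hx hx₀
  have hbdry₀ := h.abs_div_add_mul_primitive_le hN (hx.trans hx₀) le_rfl
  rw [_root_.abs_le] at hrest hbdry hbdry₀ ⊢
  constructor <;> linarith

lemma abs_integral_edgeLowered_le (hψ : IsEdgeSolution N ψ ψ' Φ) (h : IsEdgeBounded C N ψ ψ' Φ)
    (hx : -(2 * N ^ 2) ≤ x) (hy : -(2 * N ^ 2) ≤ y) :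
    |∫ u in x..y, edgeLowered N ψ ψ' u| ≤ 10 * C := by
  have hzero : ∀ z, -(2 * N ^ 2) ≤ z → |∫ u in (0 : ℝ)..z, edgeLowered N ψ ψ' u| ≤ 5 * C := by
    intro z hz
    obtain hz₀ | hz₀ := le_total 0 z
    · linarith [abs_integral_edgeLowered_le_of_nonneg hψ h hz₀, h.const_nonneg]
    · exact abs_integral_edgeLowered_le_of_nonpos hψ h hz hz₀
  have hint := hψ.continuous_edgeLowered.intervalIntegrable (μ := volume)
  rw [← intervalIntegral.integral_interval_sub_left (hint 0 y) (hint 0 x)]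
  linarith [hzero x hx, hzero y hy, abs_sub (∫ u in (0 : ℝ)..y, edgeLowered N ψ ψ' u)
    (∫ u in (0 : ℝ)..x, edgeLowered N ψ ψ' u)]

theorem abs_integral_edgeKernel_le (hψ : IsEdgeSolution N ψ ψ' Φ) (h : IsEdgeBounded C N ψ ψ' Φ)
    (hx : -(2 * N ^ 2) ≤ x) (hy : -(2 * N ^ 2) ≤ y) :
    |∫ u in x..y, edgeKernel N ψ ψ' Φ u x| ≤ 56 * C ^ 2 := by
  have hprim : |∫ u in x..y, ψ u| ≤ 2 * C := by
    rw [intervalIntegral.integral_eq_sub_of_hasDerivAt (fun u _ => hψ.hasDerivAt_primitive u)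
      (hψ.continuous.intervalIntegrable _ _)]
    linarith [abs_sub (Φ y) (Φ x), h.abs_primitive_le x hx, h.abs_primitive_le y hy]
  have hcoeff : |1 / (2 * N)| ≤ 1 / 2 := by
    rw [abs_of_nonneg (by have := hψ.one_le; positivity)]
    exact one_div_two_mul_le_half hψ.one_le
  have hsecond : |1 / (2 * N) * ψ x * ∫ u in x..y, ψ u| ≤ 1 / 2 * C * (2 * C) :=
    abs_mul_le_of_abs_le (abs_mul_le_of_abs_le hcoeff (h.abs_le_const hx)) hprim
  have hthird : |1 / 2 * Φ x * ∫ u in x..y, edgeLowered N ψ ψ' u| ≤ 1 / 2 * C * (10 * C) :=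
    abs_mul_le_of_abs_le (abs_mul_le_of_abs_le (abs_of_pos one_half_pos).le
      (h.abs_primitive_le x hx)) (abs_integral_edgeLowered_le hψ h hx hy)
  have hfirst := abs_integral_dslope_wronskian_le hψ h hx hy
  rw [hψ.integral_edgeKernel]
  rw [_root_.abs_le] at hfirst hsecond hthird ⊢
  constructor <;> linarith

end IsEdgeBounded

/-! ### Pointwise kernel bounds -/

section WeightAlgebra

variable {p q r s d : ℝ}

lemma two_le_div_add_div (hp : 0 < p) (hq : 0 < q) : 2 ≤ p / q + q / p := by
  rw [div_add_div _ _ hq.ne' hp.ne', le_div_iff₀ (mul_pos hq hp)]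
  nlinarith [sq_nonneg (p - q)]

lemma div_le_one_add_div (hp : 0 < p) (hq : 0 < q) (hr : 1 ≤ r) (hpr : p ≤ r) (hs : s ≤ 1 + q) :
    s / r ≤ 1 + q / p := by
  have hr₀ := one_pos.trans_le hr
  calc s / r ≤ 1 / r + q / r := by rw [← add_div]; gcongr
    _ ≤ 1 + q / p := add_le_add ((div_le_one hr₀).2 hr) (by gcongr)

lemma pow_three_div_le (hp : 0 < p) (hq : 0 < q) (hr : 1 ≤ r) (hpr : p ≤ r) (hs₀ : 0 ≤ s)
    (hs : s ≤ 1 + q) : s ^ 3 / r ≤ 4 + 4 * (q ^ 3 / p) := by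
  have := one_pos.trans_le hr
  have hpow : (1 + q) ^ 3 ≤ 4 + 4 * q ^ 3 := by nlinarith [mul_nonneg (sq_nonneg (q - 1)) hq.le]
  calc s ^ 3 / r ≤ (4 + 4 * q ^ 3) / r := by gcongr; exact (by gcongr : s ^ 3 ≤ _).trans hpow
    _ = 4 / r + 4 * (q ^ 3 / r) := by ring
    _ ≤ 4 + 4 * (q ^ 3 / p) := add_le_add (div_le_self zero_le_four hr) (by gcongr)

lemma pow_three_div_add_pow_three_div (hp : p ≠ 0) (hq : q ≠ 0) :
    p ^ 3 / q + q ^ 3 / p = (p ^ 4 + q ^ 4) / (p * q) := by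
  field_simp

lemma two_mul_pow_four_add_pow_four_le_sq (hp : 0 < p) (hq : 0 < q) :
    2 * (p ^ 4 + q ^ 4) ≤ (p ^ 3 / q + q ^ 3 / p) ^ 2 := by
  rw [pow_three_div_add_pow_three_div hp.ne' hq.ne', div_pow, le_div_iff₀ (by positivity)]
  nlinarith [mul_nonneg (sq_nonneg (p ^ 2 - q ^ 2)) (by positivity : 0 ≤ p ^ 4 + q ^ 4)]

lemma mul_le_one_add_half (hp : 0 < p) (hq : 0 < q) (hr : r ^ 4 = 1 + p ^ 4)
    (hs : s ^ 4 = 1 + q ^ 4) : r * s ≤ 1 + (p ^ 3 / q + q ^ 3 / p) / 2 := by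
  have hT : 0 ≤ p ^ 3 / q + q ^ 3 / p := by positivity
  have hsq : (r * s) ^ 2 ≤ 1 + (p ^ 4 + q ^ 4) / 2 := by
    rw [mul_pow]
    nlinarith [sq_nonneg (r ^ 2 - s ^ 2)]
  refine (abs_le_of_sq_le_sq' ?_ (by positivity)).2
  nlinarith [two_mul_pow_four_add_pow_four_le_sq hp hq]

lemma one_le_add_div (hp : 0 < p) (hq : 0 < q) (hd : 0 < d) (hdm : d ≤ p ^ 4 + q ^ 4) :
    1 ≤ p ^ 3 / q + q ^ 3 / p + (p / q + q / p) / d := by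
  have hT : 0 ≤ p ^ 3 / q + q ^ 3 / p := by positivity
  have hS := two_le_div_add_div hp hq
  obtain hm | hm := le_total 1 (p ^ 4 + q ^ 4)
  · have hSd : 0 ≤ (p / q + q / p) / d := by positivity
    nlinarith [two_mul_pow_four_add_pow_four_le_sq hp hq]
  · linarith [(one_le_div hd).2 (by linarith : d ≤ p / q + q / p)]

end WeightAlgebra

section EdgeWeightComparison

variable {x y : ℝ}

lemma rpow_one_div_four_pow_four (x : ℝ) : (|x| ^ ((1 : ℝ) / 4)) ^ 4 = |x| := by
  rw [← Real.rpow_natCast, ← Real.rpow_mul (abs_nonneg x)]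
  norm_num

lemma rpow_le_edgeWeight (x : ℝ) : |x| ^ ((1 : ℝ) / 4) ≤ edgeWeight x := by
  unfold edgeWeight
  gcongr
  linarith

lemma edgeWeight_le_one_add_rpow (x : ℝ) : edgeWeight x ≤ 1 + |x| ^ ((1 : ℝ) / 4) := by
  simpa only [edgeWeight, Real.one_rpow] using
    Real.rpow_add_le_add_rpow zero_le_one (abs_nonneg x) (by norm_num) (by norm_num)

lemma Ghat_eq_div (k c : ℕ) (x y : ℝ) :
    Ghat (-k / 4) (1 / 4) c x y = ((|x| ^ ((1 : ℝ) / 4)) ^ k / |y| ^ ((1 : ℝ) / 4) +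
      (|y| ^ ((1 : ℝ) / 4)) ^ k / |x| ^ ((1 : ℝ) / 4)) / |x - y| ^ c := by
  have hpow : ∀ z : ℝ, |z| ^ (-(-k / 4 : ℝ)) = (|z| ^ ((1 : ℝ) / 4)) ^ k := fun z => by
    rw [← Real.rpow_natCast, ← Real.rpow_mul (abs_nonneg z)]
    congr 1
    ring
  have hinv : ∀ z : ℝ, |z| ^ (-(1 / 4 : ℝ)) = (|z| ^ ((1 : ℝ) / 4))⁻¹ := fun z =>
    Real.rpow_neg (abs_nonneg z) _
  have hdist : ∀ z : ℝ, |z| ^ (-c : ℝ) = (|z| ^ c)⁻¹ := fun z => by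
    rw [Real.rpow_neg (abs_nonneg z), Real.rpow_natCast]
  unfold Ghat Gf
  rw [hpow, hpow, hinv, hinv, abs_sub_comm y x, hdist]
  ring

lemma one_div_edgeWeight_le (hx : x ≠ 0) : 1 / edgeWeight x ≤ |x| ^ (-(1 : ℝ) / 4) := by
  have hx₀ := abs_pos.2 hx
  rw [neg_div, Real.rpow_neg hx₀.le, ← one_div]
  gcongr
  exact rpow_le_edgeWeight x

lemma abs_sub_le_rpow_pow_four (x y : ℝ) :
    |x - y| ≤ (|x| ^ ((1 : ℝ) / 4)) ^ 4 + (|y| ^ ((1 : ℝ) / 4)) ^ 4 := by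
  simpa only [rpow_one_div_four_pow_four] using abs_sub x y

lemma edgeWeight_div_add_div_le (c : ℕ) (hx : x ≠ 0) (hy : y ≠ 0) :
    (edgeWeight y / edgeWeight x + edgeWeight x / edgeWeight y) / |x - y| ^ c ≤
      2 * Ghat (-(1 : ℝ) / 4) (1 / 4) c x y := by
  have hp : 0 < |x| ^ ((1 : ℝ) / 4) := Real.rpow_pos_of_pos (abs_pos.2 hx) _
  have hq : 0 < |y| ^ ((1 : ℝ) / 4) := Real.rpow_pos_of_pos (abs_pos.2 hy) _
  have hG := Ghat_eq_div 1 c x y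
  rw [Nat.cast_one] at hG
  rw [hG, pow_one, pow_one, ← mul_div_assoc]
  gcongr
  linarith [two_le_div_add_div hp hq,
    div_le_one_add_div hp hq (one_le_edgeWeight x) (rpow_le_edgeWeight x)
      (edgeWeight_le_one_add_rpow y),
    div_le_one_add_div hq hp (one_le_edgeWeight y) (rpow_le_edgeWeight y)
      (edgeWeight_le_one_add_rpow x)]

lemma edgeWeight_pow_three_div_add_mul_le (hx : x ≠ 0) (hy : y ≠ 0) (hxy : x ≠ y) :
    (edgeWeight y ^ 3 / edgeWeight x + edgeWeight x * edgeWeight y) / |x - y| ≤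
      10 * (Ghat (-(1 : ℝ) / 4) (1 / 4) 2 x y + Ghat (-(3 : ℝ) / 4) (1 / 4) 1 x y) := by
  have hp : 0 < |x| ^ ((1 : ℝ) / 4) := Real.rpow_pos_of_pos (abs_pos.2 hx) _
  have hq : 0 < |y| ^ ((1 : ℝ) / 4) := Real.rpow_pos_of_pos (abs_pos.2 hy) _
  have hd := abs_pos.2 (sub_ne_zero.2 hxy)
  have hG₁ := Ghat_eq_div 1 2 x y
  have hG₃ := Ghat_eq_div 3 1 x y
  rw [Nat.cast_one, Nat.cast_ofNat] at hG₁
  rw [Nat.cast_one, Nat.cast_ofNat] at hG₃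
  rw [hG₁, hG₃, div_le_iff₀ hd]
  have hcube := pow_three_div_le hp hq (one_le_edgeWeight x) (rpow_le_edgeWeight x)
    (edgeWeight_pos y).le (edgeWeight_le_one_add_rpow y)
  have hmul := mul_le_one_add_half hp hq (r := edgeWeight x) (s := edgeWeight y)
    (by rw [edgeWeight_pow_four, rpow_one_div_four_pow_four])
    (by rw [edgeWeight_pow_four, rpow_one_div_four_pow_four])
  have hone := one_le_add_div hp hq hd (abs_sub_le_rpow_pow_four x y)
  have hT₁ : 0 ≤ (|x| ^ ((1 : ℝ) / 4)) ^ 3 / |y| ^ ((1 : ℝ) / 4) := by positivity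
  have hS : 0 ≤ (|x| ^ ((1 : ℝ) / 4) / |y| ^ ((1 : ℝ) / 4) +
      |y| ^ ((1 : ℝ) / 4) / |x| ^ ((1 : ℝ) / 4)) / |x - y| := by positivity
  calc _ ≤ 10 * ((|x| ^ ((1 : ℝ) / 4)) ^ 3 / |y| ^ ((1 : ℝ) / 4) +
        (|y| ^ ((1 : ℝ) / 4)) ^ 3 / |x| ^ ((1 : ℝ) / 4) +
        (|x| ^ ((1 : ℝ) / 4) / |y| ^ ((1 : ℝ) / 4) +
          |y| ^ ((1 : ℝ) / 4) / |x| ^ ((1 : ℝ) / 4)) / |x - y|) := by linarith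
    _ = _ := by field_simp; ring

lemma one_div_edgeWeight_mul_le (hx : x ≠ 0) (hy : y ≠ 0) (hxy : x ≠ y) :
    1 / (edgeWeight x * edgeWeight y) ≤ Ghat (-(3 : ℝ) / 4) (1 / 4) 1 x y := by
  have hp : 0 < |x| ^ ((1 : ℝ) / 4) := Real.rpow_pos_of_pos (abs_pos.2 hx) _
  have hq : 0 < |y| ^ ((1 : ℝ) / 4) := Real.rpow_pos_of_pos (abs_pos.2 hy) _
  have hd := abs_pos.2 (sub_ne_zero.2 hxy)
  have hG := Ghat_eq_div 3 1 x y
  rw [Nat.cast_one, Nat.cast_ofNat] at hG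
  rw [hG, pow_one, pow_three_div_add_pow_three_div hp.ne' hq.ne', le_div_iff₀ hd,
    one_div_mul_eq_div]
  gcongr
  exacts [abs_sub_le_rpow_pow_four x y, (edgeWeight_pos x).le, rpow_le_edgeWeight x,
    rpow_le_edgeWeight y]

end EdgeWeightComparison

section PointwiseBounds

variable {C N : ℝ} {ψ ψ' Φ : ℝ → ℝ} {x y : ℝ}

lemma edgeKernel_of_ne (hxy : x ≠ y) : edgeKernel N ψ ψ' Φ x y =
    (ψ x * ψ' y - ψ' x * ψ y) / (x - y) - 1 / (2 * N) * (ψ x * ψ y) +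
      1 / 2 * edgeLowered N ψ ψ' x * Φ y := by
  have hzero : ψ y * ψ' y - ψ' y * ψ y = 0 := by ring
  rw [edgeKernel, dslope_of_ne _ hxy, slope_def_field, hzero, sub_zero]

lemma IsEdgeSolution.hasDerivAt_edgeKernel_right (h : IsEdgeSolution N ψ ψ' Φ) (hxy : x ≠ y) :
    HasDerivAt (edgeKernel N ψ ψ' Φ x)
      ((ψ x * (edgePotential N y * ψ y) - ψ' x * ψ' y) / (x - y) +
        (ψ x * ψ' y - ψ' x * ψ y) / (x - y) ^ 2 - 1 / 2 * (ψ x * (ψ' y / N)) +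
        1 / 2 * (edgeLowered N ψ ψ' x * ψ y)) y := by
  have hsub := sub_ne_zero.2 hxy
  have hψ := h.hasDerivAt y trivial
  have hquot := (((h.hasDerivAt_deriv y trivial).const_mul (ψ x)).sub (hψ.const_mul (ψ' x))).div
    ((hasDerivAt_id y).const_sub x) hsub
  have hkernel := (hquot.sub ((hψ.const_mul (ψ x)).const_mul (1 / (2 * N)))).add
    ((h.hasDerivAt_primitive y).const_mul (1 / 2 * edgeLowered N ψ ψ' x))
  refine (hkernel.congr_of_eventuallyEq ?_).congr_deriv ?_
  · filter_upwards [isOpen_ne.mem_nhds hxy.symm] with z hz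
    exact edgeKernel_of_ne hz.symm
  · simp only [id, Pi.sub_apply]
    field_simp
    ring

namespace IsEdgeBounded

lemma abs_wronskian_le (h : IsEdgeBounded C N ψ ψ' Φ) (hx : -(2 * N ^ 2) ≤ x)
    (hy : -(2 * N ^ 2) ≤ y) : |ψ x * ψ' y - ψ' x * ψ y| ≤
      C ^ 2 * (edgeWeight y / edgeWeight x + edgeWeight x / edgeWeight y) :=
  calc _ ≤ |ψ x * ψ' y| + |ψ' x * ψ y| := abs_sub _ _
    _ ≤ C / edgeWeight x * (C * edgeWeight y) + C * edgeWeight x * (C / edgeWeight y) :=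
      add_le_add (abs_mul_le_of_abs_le (h.abs_le x hx) (h.abs_deriv_le y hy))
        (abs_mul_le_of_abs_le (h.abs_deriv_le x hx) (h.abs_le y hy))
    _ = _ := by ring

theorem abs_edgeKernel_le (h : IsEdgeBounded C N ψ ψ' Φ) (hN : 1 ≤ N) (hx : -(2 * N ^ 2) ≤ x)
    (hy : -(2 * N ^ 2) ≤ y) (hxy : x ≠ y) (hx₀ : x ≠ 0) (hy₀ : y ≠ 0) :
    |edgeKernel N ψ ψ' Φ x y| ≤
      2 * C ^ 2 * (Ghat (-(1 : ℝ) / 4) (1 / 4) 1 x y + |x| ^ (-(1 : ℝ) / 4)) := by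
  have hfirst : |(ψ x * ψ' y - ψ' x * ψ y) / (x - y)| ≤
      C ^ 2 * (2 * Ghat (-(1 : ℝ) / 4) (1 / 4) 1 x y) := by
    have hweights := edgeWeight_div_add_div_le 1 hx₀ hy₀
    rw [Nat.cast_one, pow_one] at hweights
    rw [abs_div]
    calc _ ≤ _ / |x - y| := by gcongr; exact h.abs_wronskian_le hx hy
      _ = C ^ 2 * (_ / |x - y|) := mul_div_assoc _ _ _
      _ ≤ _ := by gcongr
  have hsecond : |1 / (2 * N) * (ψ x * ψ y)| ≤ 1 / 2 * (C / edgeWeight x * C) := by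
    refine abs_mul_le_of_abs_le ?_ (abs_mul_le_of_abs_le (h.abs_le x hx) (h.abs_le_const hy))
    rw [abs_of_nonneg (by positivity)]
    exact one_div_two_mul_le_half hN
  have hthird : |1 / 2 * edgeLowered N ψ ψ' x * Φ y| ≤ 1 / 2 * (3 * C / edgeWeight x) * C :=
    abs_mul_le_of_abs_le (abs_mul_le_of_abs_le (abs_of_pos one_half_pos).le
      (h.abs_edgeLowered_le hN hx)) (h.abs_primitive_le y hy)
  have hrest := mul_le_mul_of_nonneg_left (one_div_edgeWeight_le hx₀) (sq_nonneg C)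
  rw [edgeKernel_of_ne hxy]
  calc _ ≤ |(ψ x * ψ' y - ψ' x * ψ y) / (x - y)| + |1 / (2 * N) * (ψ x * ψ y)| +
        |1 / 2 * edgeLowered N ψ ψ' x * Φ y| :=
        (abs_add_le _ _).trans (add_le_add_left (abs_sub _ _) _)
    _ ≤ C ^ 2 * (2 * Ghat (-(1 : ℝ) / 4) (1 / 4) 1 x y) + 1 / 2 * (C / edgeWeight x * C) +
        1 / 2 * (3 * C / edgeWeight x) * C := by gcongr
    _ = 2 * (C ^ 2 * Ghat (-(1 : ℝ) / 4) (1 / 4) 1 x y) + 2 * (C ^ 2 * (1 / edgeWeight x)) := by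
        ring
    _ ≤ _ := by linarith

lemma abs_wronskian_deriv_right_le (h : IsEdgeBounded C N ψ ψ' Φ) (hx : -(2 * N ^ 2) ≤ x)
    (hy : -(2 * N ^ 2) ≤ y) : |ψ x * (edgePotential N y * ψ y) - ψ' x * ψ' y| ≤
      C ^ 2 * (edgeWeight y ^ 3 / edgeWeight x + edgeWeight x * edgeWeight y) :=
  calc _ ≤ |ψ x * (edgePotential N y * ψ y)| + |ψ' x * ψ' y| := abs_sub _ _
    _ ≤ C / edgeWeight x * (C * edgeWeight y ^ 3) + C * edgeWeight x * (C * edgeWeight y) :=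
      add_le_add (abs_mul_le_of_abs_le (h.abs_le x hx) (h.abs_potential_mul_le y hy))
        (abs_mul_le_of_abs_le (h.abs_deriv_le x hx) (h.abs_deriv_le y hy))
    _ = _ := by ring

lemma abs_half_mul_deriv_div_le (h : IsEdgeBounded C N ψ ψ' Φ) (hN : 1 ≤ N)
    (hx : -(2 * N ^ 2) ≤ x) (hy : -(2 * N ^ 2) ≤ y) :
    |1 / 2 * (ψ x * (ψ' y / N))| ≤ C ^ 2 * (1 / (edgeWeight x * edgeWeight y)) :=
  (abs_mul_le_of_abs_le (abs_of_pos one_half_pos).le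
    (abs_mul_le_of_abs_le (h.abs_le x hx) (h.abs_deriv_div_le hN hy))).trans_eq (by ring)

lemma abs_half_mul_edgeLowered_mul_le (h : IsEdgeBounded C N ψ ψ' Φ) (hN : 1 ≤ N)
    (hx : -(2 * N ^ 2) ≤ x) (hy : -(2 * N ^ 2) ≤ y) :
    |1 / 2 * (edgeLowered N ψ ψ' x * ψ y)| ≤
      3 / 2 * (C ^ 2 * (1 / (edgeWeight x * edgeWeight y))) :=
  (abs_mul_le_of_abs_le (abs_of_pos one_half_pos).le
    (abs_mul_le_of_abs_le (h.abs_edgeLowered_le hN hx) (h.abs_le y hy))).trans_eq (by ring)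

theorem abs_deriv_edgeKernel_le (hψ : IsEdgeSolution N ψ ψ' Φ) (h : IsEdgeBounded C N ψ ψ' Φ)
    (hx : -(2 * N ^ 2) ≤ x) (hy : -(2 * N ^ 2) ≤ y) (hxy : x ≠ y) (hx₀ : x ≠ 0) (hy₀ : y ≠ 0) :
    |deriv (edgeKernel N ψ ψ' Φ x) y| ≤ 15 * C ^ 2 *
      (Ghat (-(1 : ℝ) / 4) (1 / 4) 2 x y + Ghat (-(3 : ℝ) / 4) (1 / 4) 1 x y) := by
  have hfirst : |(ψ x * (edgePotential N y * ψ y) - ψ' x * ψ' y) / (x - y)| ≤ C ^ 2 *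
      (10 * (Ghat (-(1 : ℝ) / 4) (1 / 4) 2 x y + Ghat (-(3 : ℝ) / 4) (1 / 4) 1 x y)) := by
    rw [abs_div]
    calc _ ≤ _ / |x - y| := by gcongr; exact h.abs_wronskian_deriv_right_le hx hy
      _ = C ^ 2 * (_ / |x - y|) := mul_div_assoc _ _ _
      _ ≤ _ := by gcongr; exact edgeWeight_pow_three_div_add_mul_le hx₀ hy₀ hxy
  have hsecond : |(ψ x * ψ' y - ψ' x * ψ y) / (x - y) ^ 2| ≤
      C ^ 2 * (2 * Ghat (-(1 : ℝ) / 4) (1 / 4) 2 x y) := by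
    have hweights := edgeWeight_div_add_div_le 2 hx₀ hy₀
    rw [Nat.cast_ofNat] at hweights
    rw [abs_div, abs_pow]
    calc _ ≤ _ / |x - y| ^ 2 := by gcongr; exact h.abs_wronskian_le hx hy
      _ = C ^ 2 * (_ / |x - y| ^ 2) := mul_div_assoc _ _ _
      _ ≤ _ := by gcongr
  have hthird := h.abs_half_mul_deriv_div_le hψ.one_le hx hy
  have hfourth := h.abs_half_mul_edgeLowered_mul_le hψ.one_le hx hy
  have hweight := mul_le_mul_of_nonneg_left (one_div_edgeWeight_mul_le hx₀ hy₀ hxy) (sq_nonneg C)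
  have hG : 0 ≤ C ^ 2 * Ghat (-(1 : ℝ) / 4) (1 / 4) 2 x y := by
    unfold Ghat Gf
    positivity
  have hG' : 0 ≤ C ^ 2 * Ghat (-(3 : ℝ) / 4) (1 / 4) 1 x y := by
    unfold Ghat Gf
    positivity
  rw [(hψ.hasDerivAt_edgeKernel_right hxy).deriv]
  rw [_root_.abs_le] at hfirst hsecond hthird hfourth ⊢
  constructor <;> linarith

end IsEdgeBounded

end PointwiseBounds

/-! ### Hermite functions -/

section Hermite

open Polynomial in
lemma derivative_hermite_succ (m : ℕ) :
    derivative (hermite (m + 1)) = ((m : ℤ[X]) + 1) * hermite m := by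
  induction m with
  | zero => simp
  | succ m ih =>
    have hderiv : derivative (hermite m) = X * hermite m - hermite (m + 1) := by
      rw [hermite_succ m]; ring
    rw [hermite_succ (m + 1), derivative_sub, derivative_mul, derivative_X, ih, derivative_mul,
      derivative_add, derivative_natCast, derivative_one, hderiv]
    push_cast
    ring

lemma hermiteP_eq_aeval (m : ℕ) (t : ℝ) :
    hermiteP m t = Polynomial.aeval t (Polynomial.hermite m) := by
  have hgauss : (fun t : ℝ => Real.exp (-t ^ 2 / 2)) = fun t => Real.exp (-(t ^ 2 / 2)) := by
    simp only [neg_div]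
  rw [hermiteP, Polynomial.hermite_eq_deriv_gaussian, iteratedDeriv_eq_iterate, hgauss,
    Real.exp_neg]
  field_simp

lemma hermiteP_zero (t : ℝ) : hermiteP 0 t = 1 := by
  simp [hermiteP_eq_aeval]

lemma hasDerivAt_hermiteP (m : ℕ) (t : ℝ) :
    HasDerivAt (hermiteP m) (t * hermiteP m t - hermiteP (m + 1) t) t := by
  rw [funext (hermiteP_eq_aeval m), hermiteP_eq_aeval]
  refine ((Polynomial.hermite m).hasDerivAt_aeval t).congr_deriv ?_
  simp [Polynomial.hermite_succ]

lemma hasDerivAt_hermiteP_succ (m : ℕ) (t : ℝ) :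
    HasDerivAt (hermiteP (m + 1)) ((m + 1) * hermiteP m t) t := by
  rw [funext (hermiteP_eq_aeval (m + 1)), hermiteP_eq_aeval]
  refine ((Polynomial.hermite (m + 1)).hasDerivAt_aeval t).congr_deriv ?_
  rw [derivative_hermite_succ]
  simp

lemma hermiteP_add_two (m : ℕ) (t : ℝ) :
    hermiteP (m + 2) t = t * hermiteP (m + 1) t - (m + 1) * hermiteP m t := by
  linear_combination (hasDerivAt_hermiteP_succ m t).unique (hasDerivAt_hermiteP (m + 1) t)

lemma hermiteP_neg (m : ℕ) (t : ℝ) : hermiteP m (-t) = (-1) ^ m * hermiteP m t := by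
  have hiter := iteratedDeriv_comp_neg m (fun t : ℝ => Real.exp (-t ^ 2 / 2)) t
  simp only [neg_sq, smul_eq_mul] at hiter
  have hsign : ((-1 : ℝ) ^ m) * (-1) ^ m = 1 := by rw [← mul_pow]; simp
  unfold hermiteP
  rw [hiter, neg_sq]
  linear_combination (-(-1 : ℝ) ^ m * Real.exp (t ^ 2 / 2) *
    iteratedDeriv m (fun t => Real.exp (-t ^ 2 / 2)) (-t)) * hsign

lemma hermiteP_zero_pow_four_mul_le (k : ℕ) :
    hermiteP (2 * k) 0 ^ 4 * (2 * k + 1) ≤ ((2 * k).factorial : ℝ) ^ 2 := by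
  induction k with
  | zero => simp [hermiteP_zero]
  | succ k ih =>
    have hratio : (2 * k + 1 : ℝ) * (2 * k + 3) ≤ (2 * k + 2) ^ 2 := by linarith
    rw [show 2 * (k + 1) = 2 * k + 2 by ring, hermiteP_add_two, Nat.factorial_succ,
      Nat.factorial_succ]
    push_cast
    calc _ = (2 * k + 1 : ℝ) ^ 2 * ((2 * k + 1) * (2 * k + 3)) *
          (hermiteP (2 * k) 0 ^ 4 * (2 * k + 1)) := by ring
      _ ≤ (2 * k + 1 : ℝ) ^ 2 * (2 * k + 2) ^ 2 * ((2 * k).factorial : ℝ) ^ 2 := by gcongr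
      _ = _ := by ring

end Hermite

section Oscillator

lemma factorial_rpow_neg_half (m : ℕ) : (m.factorial : ℝ) ^ (-(1 : ℝ) / 2) =
    √(m + 1) * ((m + 1).factorial : ℝ) ^ (-(1 : ℝ) / 2) := by
  have hm : (0 : ℝ) < m + 1 := by positivity
  rw [Nat.factorial_succ, Nat.cast_mul, Nat.cast_add_one, Real.mul_rpow hm.le (by positivity),
    neg_div, Real.rpow_neg hm.le, ← Real.sqrt_eq_rpow,
    mul_inv_cancel_left₀ (Real.sqrt_pos.2 hm).ne']

lemma hasDerivAt_exp_neg_sq_div_four (t : ℝ) :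
    HasDerivAt (fun t : ℝ => Real.exp (-t ^ 2 / 4)) (-(t / 2) * Real.exp (-t ^ 2 / 4)) t := by
  refine (((hasDerivAt_id t).pow 2).neg.div_const 4).exp.congr_deriv ?_
  simp only [id, Nat.cast_ofNat, Nat.add_one_sub_one, pow_one, Pi.neg_apply, Pi.pow_apply]
  ring

lemma hasDerivAt_osc (m : ℕ) (t : ℝ) :
    HasDerivAt (osc m) (t / 2 * osc m t - √(m + 1) * osc (m + 1) t) t := by
  refine (((hasDerivAt_exp_neg_sq_div_four t).const_mul _).mul
    (hasDerivAt_hermiteP m t)).congr_deriv ?_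
  unfold osc
  rw [factorial_rpow_neg_half m]
  ring

lemma hasDerivAt_osc_succ (m : ℕ) (t : ℝ) :
    HasDerivAt (osc (m + 1)) (-(t / 2) * osc (m + 1) t + √(m + 1) * osc m t) t := by
  have hsq : √((m : ℝ) + 1) * √((m : ℝ) + 1) = m + 1 := Real.mul_self_sqrt (by positivity)
  refine (((hasDerivAt_exp_neg_sq_div_four t).const_mul _).mul
    (hasDerivAt_hermiteP_succ m t)).congr_deriv ?_
  unfold osc
  rw [factorial_rpow_neg_half m]
  linear_combination (-((2 * Real.pi) ^ (-(1 : ℝ) / 4) * ((m + 1).factorial : ℝ) ^ (-(1 : ℝ) / 2) *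
    Real.exp (-t ^ 2 / 4) * hermiteP m t)) * hsq

lemma hasDerivAt_deriv_osc (m : ℕ) (t : ℝ) :
    HasDerivAt (deriv (osc m)) ((t ^ 2 / 4 - m - 1 / 2) * osc m t) t := by
  have hsq : √((m : ℝ) + 1) * √((m : ℝ) + 1) = m + 1 := Real.mul_self_sqrt (by positivity)
  rw [funext fun t => (hasDerivAt_osc m t).deriv]
  refine ((((hasDerivAt_id t).div_const 2).mul (hasDerivAt_osc m t)).sub
    ((hasDerivAt_osc_succ m t).const_mul _)).congr_deriv ?_
  simp only [id]
  linear_combination (-osc m t) * hsq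

lemma even_osc {m : ℕ} (hm : Even m) : Function.Even (osc m) := fun t => by
  simp only [osc, hermiteP_neg, hm.neg_one_pow, one_mul, neg_sq]

lemma deriv_eq_zero_of_even {f : ℝ → ℝ} (hf : Function.Even f) : deriv f 0 = 0 := by
  have h := deriv_comp_neg f (0 : ℝ)
  rw [funext hf, neg_zero] at h
  linarith

lemma osc_zero_sq_mul_sqrt_le (k : ℕ) : osc (2 * k) 0 ^ 2 * √(2 * k) ≤ 1 := by
  have hf : (0 : ℝ) < (2 * k).factorial := by positivity
  have hpi : ((2 * Real.pi) ^ (-(1 : ℝ) / 4)) ^ 2 ≤ 1 := by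
    refine pow_le_one₀ (by positivity) (Real.rpow_le_one_of_one_le_of_nonpos ?_ (by norm_num))
    linarith [Real.pi_gt_three]
  have hfactorial : (((2 * k).factorial : ℝ) ^ (-(1 : ℝ) / 2)) ^ 2 = ((2 * k).factorial : ℝ)⁻¹ := by
    rw [← Real.rpow_mul_natCast hf.le]
    norm_num [Real.rpow_neg_one]
  have hhermite : hermiteP (2 * k) 0 ^ 2 * √(2 * k) ≤ (2 * k).factorial := by
    refine (abs_le_of_sq_le_sq' ?_ hf.le).2
    rw [mul_pow, ← pow_mul, Real.sq_sqrt (by positivity)]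
    refine le_trans ?_ (hermiteP_zero_pow_four_mul_le k)
    gcongr
    · exact Even.pow_nonneg (even_two_mul 2) _
    · linarith
  calc osc (2 * k) 0 ^ 2 * √(2 * k)
      = ((2 * Real.pi) ^ (-(1 : ℝ) / 4)) ^ 2 * (((2 * k).factorial : ℝ) ^ (-(1 : ℝ) / 2)) ^ 2 *
          (hermiteP (2 * k) 0 ^ 2 * √(2 * k)) := by
        simp only [osc, ne_eq, OfNat.ofNat_ne_zero, not_false_eq_true, zero_pow, neg_zero,
          zero_div, Real.exp_zero]
        ring
    _ ≤ 1 * ((2 * k).factorial : ℝ)⁻¹ * (2 * k).factorial := by rw [hfactorial]; gcongr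
    _ = 1 := by rw [one_mul, inv_mul_cancel₀ hf.ne']

end Oscillator

section GaussianDecay

open Polynomial

lemma exists_osc_eq_eval_mul_exp (m : ℕ) :
    ∃ p : ℝ[X], ∀ t, osc m t = p.eval t * Real.exp (-t ^ 2 / 4) := by
  refine ⟨C ((2 * Real.pi) ^ (-(1 : ℝ) / 4) * (m.factorial : ℝ) ^ (-(1 : ℝ) / 2)) *
    (hermite m).map (algebraMap ℤ ℝ), fun t => ?_⟩
  rw [eval_mul, eval_C, eval_map_algebraMap, ← hermiteP_eq_aeval, osc]
  ring

lemma tendsto_eval_mul_exp_neg_sq_div_four (p : ℝ[X]) :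
    Tendsto (fun t => p.eval t * Real.exp (-t ^ 2 / 4)) atTop (nhds 0) := by
  have h := (p.tendsto_div_exp_atTop.abs).mul_const (Real.exp 1)
  rw [abs_zero, zero_mul] at h
  refine squeeze_zero_norm (fun t => ?_) h
  rw [Real.norm_eq_abs, abs_mul, abs_div, Real.abs_exp, Real.abs_exp, div_mul_eq_mul_div,
    mul_div_assoc, ← Real.exp_sub]
  gcongr
  nlinarith [sq_nonneg (t - 2)]

lemma integrable_eval_mul_exp_neg_sq_div_four (p : ℝ[X]) :
    Integrable fun t => p.eval t * Real.exp (-t ^ 2 / 4) := by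
  simp only [eval_eq_sum_range, Finset.sum_mul]
  refine integrable_finsetSum _ fun i _ => ?_
  have hmonomial := (integrable_rpow_mul_exp_neg_mul_sq (b := 1 / 4) (by norm_num) (s := i)
    (neg_one_lt_zero.trans_le i.cast_nonneg)).const_mul (p.coeff i)
  refine hmonomial.congr (.of_forall fun t => ?_)
  simp only [Real.rpow_natCast, mul_assoc]
  congr 3
  ring

lemma integrable_osc (m : ℕ) : Integrable (osc m) := by
  obtain ⟨p, hp⟩ := exists_osc_eq_eval_mul_exp m
  rw [funext hp]
  exact integrable_eval_mul_exp_neg_sq_div_four p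

lemma tendsto_eval_mul_osc (q : ℝ[X]) (m : ℕ) :
    Tendsto (fun t => q.eval t * osc m t) atTop (nhds 0) := by
  obtain ⟨p, hp⟩ := exists_osc_eq_eval_mul_exp m
  simpa only [hp, eval_mul, mul_assoc] using tendsto_eval_mul_exp_neg_sq_div_four (q * p)

lemma tendsto_osc_mul_deriv (m : ℕ) :
    Tendsto (fun t => osc m t * deriv (osc m) t) atTop (nhds 0) := by
  have hosc : ∀ k, Tendsto (osc k) atTop (nhds 0) := fun k => by
    simpa only [eval_one, one_mul] using tendsto_eval_mul_osc 1 k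
  have hderiv : Tendsto (deriv (osc m)) atTop (nhds 0) := by
    have h := ((tendsto_eval_mul_osc X m).const_mul (1 / 2)).sub
      ((hosc (m + 1)).const_mul (√((m : ℝ) + 1)))
    rw [mul_zero, mul_zero, sub_zero] at h
    refine h.congr fun t => ?_
    rw [(hasDerivAt_osc m t).deriv, eval_X]
    ring
  simpa only [mul_zero] using (hosc m).mul hderiv

end GaussianDecay

/-! ### The operator `ε` -/

section SignIntegral

variable {f : ℝ → ℝ}

lemma integral_sign_sub_mul (hf : Integrable f) (x : ℝ) :
    ∫ y, Real.sign (x - y) * f y = 2 * (∫ y in Iic x, f y) - ∫ y, f y := by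
  have hae : (fun y => Real.sign (x - y) * f y) =ᵐ[volume]
      fun y => 2 * (Iic x).indicator f y - f y := by
    filter_upwards [Measure.ae_ne volume x] with y hy
    rcases lt_or_gt_of_ne hy with h | h
    · rw [Real.sign_of_pos (sub_pos.2 h), indicator_of_mem (mem_Iic.2 h.le)]; ring
    · rw [Real.sign_of_neg (sub_neg.2 h), indicator_of_notMem (notMem_Iic.2 h)]; ring
  rw [integral_congr_ae hae, integral_sub ((hf.indicator measurableSet_Iic).const_mul 2) hf,
    integral_const_mul, integral_indicator measurableSet_Iic]

lemma epsF_eq_integral_Iic_sub (hf : Integrable f) (x : ℝ) :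
    epsF f x = (∫ y in Iic x, f y) - 1 / 2 * ∫ y, f y := by
  rw [epsF, integral_sign_sub_mul hf]
  ring

lemma hasDerivAt_epsF (hf : Integrable f) (hcont : Continuous f) (x : ℝ) :
    HasDerivAt (epsF f) (f x) x := by
  have hprimitive : epsF f = fun x => epsF f 0 + ∫ y in (0 : ℝ)..x, f y := by
    funext x
    rw [epsF_eq_integral_Iic_sub hf, epsF_eq_integral_Iic_sub hf,
      ← intervalIntegral.integral_Iic_sub_Iic hf.integrableOn hf.integrableOn]
    ring
  rw [hprimitive]
  exact (hcont.integral_hasStrictDerivAt 0 x).hasDerivAt.const_add _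

lemma epsF_eq_zero_of_symmetric {c : ℝ} (hsymm : ∀ y, f (2 * c - y) = f y) : epsF f c = 0 := by
  have hreflect := integral_sub_left_eq_self (fun y => Real.sign (c - y) * f y) volume (2 * c)
  have hodd : ∀ y, Real.sign (c - (2 * c - y)) * f (2 * c - y) = -(Real.sign (c - y) * f y) := by
    intro y
    rw [hsymm, show c - (2 * c - y) = -(c - y) by ring, Real.sign_neg, neg_mul]
  simp only [hodd, integral_neg] at hreflect
  rw [epsF]
  linarith

end SignIntegral

/-! ### Edge scaling -/

section EdgeScaling

lemma rpow_one_third_eq {a : ℝ} (ha : 0 ≤ a) : a ^ ((1 : ℝ) / 3) = (a ^ ((1 : ℝ) / 6)) ^ 2 := by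
  rw [← Real.rpow_mul_natCast ha]; norm_num

lemma rpow_two_thirds_eq {a : ℝ} (ha : 0 ≤ a) : a ^ ((2 : ℝ) / 3) = (a ^ ((1 : ℝ) / 3)) ^ 2 := by
  rw [← Real.rpow_mul_natCast ha]; norm_num

lemma sqrt_eq_rpow_one_sixth_pow {a : ℝ} (ha : 0 ≤ a) : √a = (a ^ ((1 : ℝ) / 6)) ^ 3 := by
  rw [← Real.rpow_mul_natCast ha, Real.sqrt_eq_rpow]; norm_num

lemma rpow_one_sixth_pow_six {a : ℝ} (ha : 0 ≤ a) : (a ^ ((1 : ℝ) / 6)) ^ 6 = a := by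
  rw [← Real.rpow_mul_natCast ha]; norm_num

lemma rpow_one_twelfth_sq {a : ℝ} (ha : 0 ≤ a) :
    (a ^ ((1 : ℝ) / 12)) ^ 2 = a ^ ((1 : ℝ) / 6) := by
  rw [← Real.rpow_mul_natCast ha]; norm_num

/-- The argument `2√n + n^{-1/6}·x` at which `psiUp n m x` evaluates `osc m`. -/
noncomputable def edgePoint (n : ℕ) (x : ℝ) : ℝ := 2 * √n + (n : ℝ) ^ (-(1 : ℝ) / 6) * x

lemma psiUp_eq (n m : ℕ) (x : ℝ) :
    psiUp n m x = (n : ℝ) ^ ((1 : ℝ) / 12) * osc m (edgePoint n x) := rfl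

lemma edgePoint_eq (n : ℕ) (x : ℝ) :
    edgePoint n x = 2 * ((n : ℝ) ^ ((1 : ℝ) / 6)) ^ 3 + ((n : ℝ) ^ ((1 : ℝ) / 6))⁻¹ * x := by
  rw [edgePoint, sqrt_eq_rpow_one_sixth_pow n.cast_nonneg, neg_div, Real.rpow_neg n.cast_nonneg]

lemma hasDerivAt_edgePoint (n : ℕ) (x : ℝ) :
    HasDerivAt (edgePoint n) ((n : ℝ) ^ ((1 : ℝ) / 6))⁻¹ x := by
  rw [funext (edgePoint_eq n)]
  simpa only [mul_one, id] using
    ((hasDerivAt_id x).const_mul ((n : ℝ) ^ ((1 : ℝ) / 6))⁻¹).const_add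
      (2 * ((n : ℝ) ^ ((1 : ℝ) / 6)) ^ 3)

variable {n : ℕ}

lemma edgePoint_center (hn : n ≠ 0) : edgePoint n (-(2 * ((n : ℝ) ^ ((1 : ℝ) / 3)) ^ 2)) = 0 := by
  have : (n : ℝ) ^ ((1 : ℝ) / 6) ≠ 0 := by positivity
  rw [edgePoint_eq, rpow_one_third_eq n.cast_nonneg]
  field_simp
  ring

lemma edgePoint_reflect (hn : n ≠ 0) (x : ℝ) :
    edgePoint n (2 * -(2 * ((n : ℝ) ^ ((1 : ℝ) / 3)) ^ 2) - x) = -edgePoint n x := by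
  have hcenter := edgePoint_center hn
  unfold edgePoint at hcenter ⊢
  linear_combination 2 * hcenter

lemma tendsto_edgePoint (hn : n ≠ 0) : Tendsto (edgePoint n) atTop atTop :=
  tendsto_atTop_add_const_left _ _ (tendsto_id.const_mul_atTop (by positivity))

lemma sq_edgePoint_eq_edgePotential (hn : n ≠ 0) (x : ℝ) :
    (((n : ℝ) ^ ((1 : ℝ) / 6))⁻¹) ^ 2 * (edgePoint n x ^ 2 / 4 - n - 1 / 2) =
      edgePotential ((n : ℝ) ^ ((1 : ℝ) / 3)) x := by
  have ha : (n : ℝ) ^ ((1 : ℝ) / 6) ≠ 0 := by positivity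
  have hn6 := rpow_one_sixth_pow_six n.cast_nonneg (a := n)
  rw [edgePotential, edgePoint_eq, rpow_one_third_eq n.cast_nonneg]
  nth_rw 4 [← hn6]
  field_simp
  ring

lemma hasDerivAt_psiN (n : ℕ) (x : ℝ) :
    HasDerivAt (psiN n) ((n : ℝ) ^ ((1 : ℝ) / 12) *
      (deriv (osc n) (edgePoint n x) * ((n : ℝ) ^ ((1 : ℝ) / 6))⁻¹)) x :=
  ((hasDerivAt_osc n _).differentiableAt.hasDerivAt.comp x (hasDerivAt_edgePoint n x)).const_mul _

lemma deriv_psiN (n : ℕ) (x : ℝ) : deriv (psiN n) x = (n : ℝ) ^ ((1 : ℝ) / 12) *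
    (deriv (osc n) (edgePoint n x) * ((n : ℝ) ^ ((1 : ℝ) / 6))⁻¹) :=
  (hasDerivAt_psiN n x).deriv

lemma hasDerivAt_deriv_psiN (hn : n ≠ 0) (x : ℝ) :
    HasDerivAt (deriv (psiN n)) (edgePotential ((n : ℝ) ^ ((1 : ℝ) / 3)) x * psiN n x) x := by
  rw [funext (deriv_psiN n), ← sq_edgePoint_eq_edgePotential hn, psiN, psiUp_eq]
  refine ((((hasDerivAt_deriv_osc n _).comp x (hasDerivAt_edgePoint n x)).mul_const _).const_mul
    _).congr_deriv ?_
  ring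

lemma continuous_psiN (n : ℕ) : Continuous (psiN n) :=
  continuous_iff_continuousAt.2 fun x => (hasDerivAt_psiN n x).continuousAt

lemma integrable_psiN (hn : n ≠ 0) : Integrable (psiN n) :=
  (((integrable_osc n).comp_add_left (2 * √n)).comp_mul_left'
    (by positivity : (n : ℝ) ^ (-(1 : ℝ) / 6) ≠ 0)).const_mul _

lemma psiN_symmetric (hn : n ≠ 0) (he : Even n) (x : ℝ) :
    psiN n (2 * -(2 * ((n : ℝ) ^ ((1 : ℝ) / 3)) ^ 2) - x) = psiN n x := by
  rw [psiN, psiUp_eq, psiUp_eq, edgePoint_reflect hn, even_osc he]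

lemma psiN_center_sq_le (hn : n ≠ 0) (he : Even n) :
    psiN n (-(2 * ((n : ℝ) ^ ((1 : ℝ) / 3)) ^ 2)) ^ 2 ≤ 1 / (n : ℝ) ^ ((1 : ℝ) / 3) := by
  have hosc : osc n 0 ^ 2 * √n ≤ 1 := by
    obtain ⟨k, rfl⟩ := he.exists_two_nsmul
    simpa only [smul_eq_mul, Nat.cast_mul, Nat.cast_ofNat] using osc_zero_sq_mul_sqrt_le k
  have ha : 0 < (n : ℝ) ^ ((1 : ℝ) / 6) := by positivity
  rw [psiN, psiUp_eq, edgePoint_center hn, mul_pow, rpow_one_twelfth_sq n.cast_nonneg,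
    rpow_one_third_eq n.cast_nonneg, le_div_iff₀ (by positivity)]
  rw [sqrt_eq_rpow_one_sixth_pow n.cast_nonneg] at hosc
  linarith

lemma tendsto_psiN_mul_deriv (hn : n ≠ 0) :
    Tendsto (fun x => psiN n x * deriv (psiN n) x) atTop (nhds 0) := by
  have h := ((tendsto_osc_mul_deriv n).comp (tendsto_edgePoint hn)).const_mul
    (((n : ℝ) ^ ((1 : ℝ) / 12)) ^ 2 * ((n : ℝ) ^ ((1 : ℝ) / 6))⁻¹)
  rw [mul_zero] at h
  refine h.congr fun x => ?_
  rw [Function.comp_apply, deriv_psiN, psiN, psiUp_eq]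
  ring

lemma isEdgeSolution_psiN (hn : n ≠ 0) (he : Even n) :
    IsEdgeSolution ((n : ℝ) ^ ((1 : ℝ) / 3)) (psiN n) (deriv (psiN n)) (epsPsi n) where
  hasDerivAt x _ := (hasDerivAt_psiN n x).differentiableAt.hasDerivAt
  hasDerivAt_deriv x _ := hasDerivAt_deriv_psiN hn x
  one_le := Real.one_le_rpow (Nat.one_le_cast.2 (Nat.one_le_iff_ne_zero.2 hn)) (by norm_num)
  hasDerivAt_primitive := hasDerivAt_epsF (integrable_psiN hn) (continuous_psiN n)
  deriv_center := by
    rw [deriv_psiN, edgePoint_center hn, deriv_eq_zero_of_even (even_osc he), zero_mul, mul_zero]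
  primitive_center := epsF_eq_zero_of_symmetric (psiN_symmetric hn he)
  sq_center_le := psiN_center_sq_le hn he
  tendsto_mul_deriv := tendsto_psiN_mul_deriv hn

lemma psiUp_pred_eq_edgeLowered (hn : n ≠ 0) (x : ℝ) : psiUp n (n - 1) x =
    edgeLowered ((n : ℝ) ^ ((1 : ℝ) / 3)) (psiN n) (deriv (psiN n)) x := by
  obtain ⟨m, rfl⟩ := Nat.exists_eq_succ_of_ne_zero hn
  have ha : ((m + 1 : ℕ) : ℝ) ^ ((1 : ℝ) / 6) ≠ 0 := by positivity
  have hsqrt := sqrt_eq_rpow_one_sixth_pow (m + 1).cast_nonneg (a := (m + 1 : ℕ))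
  rw [Nat.cast_add_one] at hsqrt
  rw [edgeLowered, deriv_psiN, (hasDerivAt_osc_succ m _).deriv, psiN, psiUp_eq, psiUp_eq, hsqrt,
    edgePoint_eq, rpow_one_third_eq (Nat.cast_nonneg _), Nat.succ_eq_add_one, Nat.add_sub_cancel]
  push_cast at ha ⊢
  field_simp
  ring

lemma J1N_eq_edgeKernel (hn : n ≠ 0) (x y : ℝ) : J1N n x y =
    edgeKernel ((n : ℝ) ^ ((1 : ℝ) / 3)) (psiN n) (deriv (psiN n)) (epsPsi n) x y := by
  rw [J1N, KAiN, psiUp_pred_eq_edgeLowered hn]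
  split_ifs with hxy
  · subst hxy
    have hwronskian :
        HasDerivAt (fun u => psiN n u * deriv (psiN n) x - deriv (psiN n) u * psiN n x)
        (deriv (psiN n) x * deriv (psiN n) x - deriv (deriv (psiN n)) x * psiN n x) x :=
      ((hasDerivAt_psiN n x).differentiableAt.hasDerivAt.mul_const _).sub
        ((hasDerivAt_deriv_psiN hn x).differentiableAt.hasDerivAt.mul_const _)
    rw [edgeKernel, dslope_same, hwronskian.deriv]
    ring
  · rw [edgeKernel_of_ne hxy]

end EdgeScaling

/-- uniform bounds on `J₁ⁿ`, its `y`-derivative, and its primitive (`n` even). -/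
theorem J1N_bounds :
    ∃ C : ℝ, 0 < C ∧ ∀ n : ℕ, 2 ≤ n → Even n → ∀ x y : ℝ,
      -(2 * (n : ℝ) ^ ((2:ℝ)/3)) ≤ x → -(2 * (n : ℝ) ^ ((2:ℝ)/3)) ≤ y →
      x ≠ y → x ≠ 0 → y ≠ 0 →
      |J1N n x y| ≤ C * (Ghat (-(1:ℝ)/4) ((1:ℝ)/4) 1 x y + |x| ^ (-(1:ℝ)/4)) ∧
      |deriv (fun z => J1N n x z) y| ≤
        C * (Ghat (-(1:ℝ)/4) ((1:ℝ)/4) 2 x y + Ghat (-(3:ℝ)/4) ((1:ℝ)/4) 1 x y) ∧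
      |∫ u in x..y, J1N n u x| ≤ C := by
  set C := 1800 + 2496 * Real.exp 9
  refine ⟨56 * C ^ 2, by positivity, fun n hn he x y hx hy hxy hx₀ hy₀ => ?_⟩
  have hn₀ : n ≠ 0 := by omega
  have hψ := isEdgeSolution_psiN hn₀ he
  have hbounds := hψ.isEdgeBounded
  rw [rpow_two_thirds_eq n.cast_nonneg] at hx hy
  have hGhat : ∀ a b c, 0 ≤ Ghat a b c x y := fun a b c => by unfold Ghat Gf; positivity
  simp only [J1N_eq_edgeKernel hn₀]
  refine ⟨(hbounds.abs_edgeKernel_le hψ.one_le hx hy hxy hx₀ hy₀).trans ?_,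
    (hbounds.abs_deriv_edgeKernel_le hψ hx hy hxy hx₀ hy₀).trans ?_,
    hbounds.abs_integral_edgeKernel_le hψ hx hy⟩
  · have := hGhat (-(1 : ℝ) / 4) (1 / 4) 1
    gcongr
    norm_num
  · have h₁ := hGhat (-(1 : ℝ) / 4) (1 / 4) 2
    have h₂ := hGhat (-(3 : ℝ) / 4) (1 / 4) 1
    gcongr
    norm_num
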